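/- arXiv:1711.00389 — 5 statements merged into one kernel-verified Lean document; each statement's English description precedes it below -/
import Mathlib

section
/- Let α, β ∈ ℂ, r > 0, κ > 0, and for z ∈ ℂ write θ(z) = ϑ₁(z/(πr); iκ). For integers ℓ, k, n, m define the weight w(n,m) = [θ(α+n+2m)·θ(β+2n)·θ(β+2n−1)·θ(α−β+1−n)·θ(α−β−n)] / [θ(α+n)·θ(β+2n+m)·θ(β+2n+m−1)·θ(α−β+1+m−n)·θ(α−β+m−n)], and define W(n,m) = [∏_{u=1}^{n−ℓ+m−k} θ(u)] / ([∏_{u=1}^{n−ℓ} θ(u)]·[∏_{u=1}^{m−k} θ(u)]) · ∏_{u=ℓ+1}^{n} [θ(α+m+k+u)/θ(α+u)] · [∏_{u=k+1}^{m} θ(β+n+ℓ+u) · ∏_{u=2ℓ+1}^{2n} θ(β+u)] / [∏_{u=2ℓ+k+1}^{2n+m} θ(β+u)] · ∏_{u=−n+1}^{−ℓ} [θ(α−β+u)·θ(α−β−1+u)] / [θ(α−β+m+u)·θ(α−β+k−1+u)]. Then for all integers n ≥ ℓ+1 and m ≥ k+1, provided every theta factor appearing in a denominator above is nonzero, the recursion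 W(n,m) = W(n,m−1) + W(n−1,m)·w(n,m) holds. -/
open scoped Real

/-- The Jacobi theta function `ϑ₁(v; τ)`, defined by its series
`ϑ₁(v; τ) = 2 ∑_{n=1}^∞ (−1)^{n−1} exp(πiτ(n−1/2)²) sin((2n−1)πv)`
(reindexed over `n : ℕ` starting from `0`). -/
noncomputable def theta1 (v τ : ℂ) : ℂ :=
  2 * ∑' n : ℕ, (-1 : ℂ) ^ n * Complex.exp (π * Complex.I * τ * ((n : ℂ) + 1 / 2) ^ 2) *
    Complex.sin ((2 * (n : ℂ) + 1) * π * v)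

/-- `θ(z) = ϑ₁(z/(πr); iκ)`. -/
noncomputable def thetaR (r κ : ℝ) (z : ℂ) : ℂ :=
  theta1 (z / (π * r)) (Complex.I * κ)

/-- The elementary elliptic weight `w(n,m)`. -/
noncomputable def wWeight (r κ : ℝ) (α β : ℂ) (n m : ℤ) : ℂ :=
  thetaR r κ (α + n + 2 * m) * thetaR r κ (β + 2 * n) * thetaR r κ (β + 2 * n - 1) *
      thetaR r κ (α - β + 1 - n) * thetaR r κ (α - β - n) /
    (thetaR r κ (α + n) * thetaR r κ (β + 2 * n + m) * thetaR r κ (β + 2 * n + m - 1) *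
      thetaR r κ (α - β + 1 + m - n) * thetaR r κ (α - β + m - n))

/-- Schlosser's product formula `W(n,m)` for the lattice-path generating function. -/
noncomputable def WProd (r κ : ℝ) (α β : ℂ) (ℓ k n m : ℤ) : ℂ :=
  (∏ u ∈ Finset.Icc (1 : ℤ) (n - ℓ + m - k), thetaR r κ (u : ℂ)) /
      ((∏ u ∈ Finset.Icc (1 : ℤ) (n - ℓ), thetaR r κ (u : ℂ)) *
        (∏ u ∈ Finset.Icc (1 : ℤ) (m - k), thetaR r κ (u : ℂ))) *
    (∏ u ∈ Finset.Icc (ℓ + 1) n, thetaR r κ (α + m + k + u) / thetaR r κ (α + u)) *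
    ((∏ u ∈ Finset.Icc (k + 1) m, thetaR r κ (β + n + ℓ + u)) *
        (∏ u ∈ Finset.Icc (2 * ℓ + 1) (2 * n), thetaR r κ (β + u)) /
      (∏ u ∈ Finset.Icc (2 * ℓ + k + 1) (2 * n + m), thetaR r κ (β + u))) *
    (∏ u ∈ Finset.Icc (-n + 1) (-ℓ),
      thetaR r κ (α - β + u) * thetaR r κ (α - β - 1 + u) /
        (thetaR r κ (α - β + m + u) * thetaR r κ (α - β + k - 1 + u)))

/-- All theta factors appearing in a denominator of `W(n,m)` are nonzero. -/
def WDenomOk (r κ : ℝ) (α β : ℂ) (ℓ k n m : ℤ) : Prop :=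
  (∀ u ∈ Finset.Icc (1 : ℤ) (n - ℓ), thetaR r κ (u : ℂ) ≠ 0) ∧
  (∀ u ∈ Finset.Icc (1 : ℤ) (m - k), thetaR r κ (u : ℂ) ≠ 0) ∧
  (∀ u ∈ Finset.Icc (ℓ + 1) n, thetaR r κ (α + u) ≠ 0) ∧
  (∀ u ∈ Finset.Icc (2 * ℓ + k + 1) (2 * n + m), thetaR r κ (β + u) ≠ 0) ∧
  (∀ u ∈ Finset.Icc (-n + 1) (-ℓ),
    thetaR r κ (α - β + m + u) ≠ 0 ∧ thetaR r κ (α - β + k - 1 + u) ≠ 0)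

/-- All theta factors appearing in the denominator of `w(n,m)` are nonzero. -/
def wDenomOk (r κ : ℝ) (α β : ℂ) (n m : ℤ) : Prop :=
  thetaR r κ (α + n) ≠ 0 ∧ thetaR r κ (β + 2 * n + m) ≠ 0 ∧
  thetaR r κ (β + 2 * n + m - 1) ≠ 0 ∧ thetaR r κ (α - β + 1 + m - n) ≠ 0 ∧
  thetaR r κ (α - β + m - n) ≠ 0

/-!
Expanding a product of two theta series and splitting the pairs of integers by the parity of their
sum gives `ϑ₁(x + y) ϑ₁(x - y) = A(x) B(y) - B(x) A(y)`, so that Weierstrass' three-term relation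
for `ϑ₁` is the Plücker relation between `2 × 2` minors. Over the common denominator of `W(n, m)`,
`W(n, m - 1)` and `W(n - 1, m) w(n, m)`, the numerators share all theta factors except four each,
and the recursion between these three products of four is an instance of the three-term relation.
Nothing else about `ϑ₁` enters, so the recursion holds for every solution of that relation over a
field in which `2 ≠ 0`: `θ(z) = z` gives a rational version and `θ = sin` a trigonometric one.
-/

section ThreeTerm

/-- Weierstrass' three-term relation (the addition formula of the sigma function), written as an
identity between products of values of `θ`. -/
def WeierstrassThreeTerm {R S : Type*} [AddGroup R] [CommRing S] (θ : R → S) : Prop :=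
  ∀ x y z w, θ (x + y) * θ (x - y) * (θ (z + w) * θ (z - w)) =
    θ (x + z) * θ (x - z) * (θ (y + w) * θ (y - w)) +
      θ (x + w) * θ (x - w) * (θ (z + y) * θ (z - y))

namespace WeierstrassThreeTerm

theorem of_eq_mul_sub_mul {R S : Type*} [AddGroup R] [CommRing S] {θ A B : R → S}
    (h : ∀ x y, θ (x + y) * θ (x - y) = A x * B y - B x * A y) : WeierstrassThreeTerm θ := by
  intro x y z w
  simp only [h]
  ring

theorem comp_div {K S : Type*} [DivisionRing K] [CommRing S] {θ : K → S}
    (hθ : WeierstrassThreeTerm θ) (c : K) : WeierstrassThreeTerm fun z => θ (z / c) := by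
  intro x y z w
  simpa only [add_div, sub_div] using hθ (x / c) (y / c) (z / c) (w / c)

theorem lattice_path_identity {K S : Type*} [Field K] [NeZero (2 : K)] [CommRing S] {θ : K → S}
    (hθ : WeierstrassThreeTerm θ) (α β ℓ k n m : K) :
    θ (n - ℓ + m - k) * θ (α + m + k + n) * θ (β + n + ℓ + m) * θ (α - β + m - n) =
      θ (m - k) * θ (α + m + k + ℓ) * θ (β + 2 * n + m) * θ (α - β + m - ℓ) +
        θ (n - ℓ) * θ (β + n + ℓ + k) * θ (α - β + k - n) * θ (α + n + 2 * m) := by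
  obtain ⟨s, rfl⟩ : ∃ s, α = 2 * s - ℓ := ⟨(α + ℓ) / 2, by field_simp; ring⟩
  have h := hθ (s + n + m - ℓ) (s + k) (s + m) (β - s + n + ℓ)
  ring_nf at h ⊢
  linear_combination h

end WeierstrassThreeTerm

end ThreeTerm

section ThetaSeries

open Complex

/-- The term of index `n + 1/2` of the classical theta series `θ₂`; Mathlib's `jacobiTheta₂_term`,
the classical `θ₃`, is indexed by integers instead. -/
noncomputable def jacobiThetaHalf_term (n : ℤ) (z τ : ℂ) : ℂ :=
  cexp (2 * π * I * (n + 1 / 2) * z + π * I * (n + 1 / 2) ^ 2 * τ)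

/-- The classical Jacobi theta function `θ₂(z, τ)`, the theta series over the half-integers. It is
not Mathlib's `jacobiTheta₂`, whose subscript counts variables. -/
noncomputable def jacobiThetaHalf (z τ : ℂ) : ℂ := ∑' n : ℤ, jacobiThetaHalf_term n z τ

theorem jacobiThetaHalf_term_eq_mul_jacobiTheta₂_term (n : ℤ) (z τ : ℂ) :
    jacobiThetaHalf_term n z τ =
      cexp (π * I * z + π * I * τ / 4) * jacobiTheta₂_term n (z + τ / 2) τ := by
  rw [jacobiThetaHalf_term, jacobiTheta₂_term, ← Complex.exp_add]
  ring_nf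

theorem hasSum_jacobiThetaHalf_term (z : ℂ) {τ : ℂ} (hτ : 0 < τ.im) :
    HasSum (fun n => jacobiThetaHalf_term n z τ) (jacobiThetaHalf z τ) := by
  refine Summable.hasSum ?_
  simpa only [jacobiThetaHalf_term_eq_mul_jacobiTheta₂_term] using
    ((summable_jacobiTheta₂_term_iff (z + τ / 2) τ).2 hτ).mul_left _

theorem jacobiThetaHalf_term_add_one (n : ℤ) (z τ : ℂ) :
    jacobiThetaHalf_term n (z + 1) τ = -jacobiThetaHalf_term n z τ := by
  have h : 2 * π * I * (n + 1 / 2) * (z + 1) + π * I * (n + 1 / 2) ^ 2 * τ =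
      2 * π * I * (n + 1 / 2) * z + π * I * (n + 1 / 2) ^ 2 * τ + n * (2 * π * I) + π * I := by
    ring
  rw [jacobiThetaHalf_term, jacobiThetaHalf_term, h, Complex.exp_add, Complex.exp_add,
    exp_int_mul_two_pi_mul_I, exp_pi_mul_I, mul_one, mul_neg_one]

theorem jacobiThetaHalf_add_one (z τ : ℂ) :
    jacobiThetaHalf (z + 1) τ = -jacobiThetaHalf z τ := by
  simp only [jacobiThetaHalf, jacobiThetaHalf_term_add_one, tsum_neg]

theorem jacobiThetaHalf_term_add_reflect (n : ℤ) (z τ : ℂ) :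
    jacobiThetaHalf_term n z τ + jacobiThetaHalf_term (-(n + 1)) z τ =
      2 * (cexp (π * I * τ * (n + 1 / 2) ^ 2) * cos ((2 * n + 1) * π * z)) := by
  have double_mul_half (p q r : ℂ) : 2 * (p * ((q + r) / 2)) = p * q + p * r := by ring
  rw [jacobiThetaHalf_term, jacobiThetaHalf_term, Complex.cos, double_mul_half,
    ← Complex.exp_add, ← Complex.exp_add]
  push_cast
  ring_nf

theorem cos_odd_mul_pi_mul_add_half (n : ℕ) (v : ℂ) :
    cos ((2 * n + 1) * π * (v + 1 / 2)) = -((-1) ^ n * sin ((2 * n + 1) * π * v)) := by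
  have h : (2 * n + 1) * π * (v + 1 / 2) = (2 * n + 1) * π * v + n * π + π / 2 := by ring
  rw [h, cos_add_pi_div_two, sin_antiperiodic.add_nat_mul_eq]

theorem theta1_eq_neg_jacobiThetaHalf (v : ℂ) {τ : ℂ} (hτ : 0 < τ.im) :
    theta1 v τ = -jacobiThetaHalf (v + 1 / 2) τ := by
  rw [← (hasSum_jacobiThetaHalf_term (v + 1 / 2) hτ).nat_add_neg_add_one.tsum_eq, theta1,
    ← tsum_mul_left, ← tsum_neg]
  refine tsum_congr fun n => ?_
  rw [jacobiThetaHalf_term_add_reflect, Int.cast_natCast, cos_odd_mul_pi_mul_add_half]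
  ring

/-- Pairs of integers split by the parity of their sum: `(a + b, a - b)` runs over the pairs with
even sum, and `(a + b, a - b - 1)` over those with odd sum. -/
def intPairParityEquiv : (ℤ × ℤ) ⊕ (ℤ × ℤ) ≃ ℤ × ℤ where
  toFun := Sum.elim (fun p => (p.1 + p.2, p.1 - p.2)) fun p => (p.1 + p.2, p.1 - p.2 - 1)
  invFun q := if (q.1 + q.2) % 2 = 0 then .inl ((q.1 + q.2) / 2, (q.1 - q.2) / 2)
    else .inr ((q.1 + q.2 + 1) / 2, (q.1 - q.2) / 2)
  left_inv := by
    rintro (⟨a, b⟩ | ⟨a, b⟩) <;> simp only [Sum.elim_inl, Sum.elim_inr] <;> grind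
  right_inv q := by
    dsimp only
    split_ifs <;> ext <;> simp only [Sum.elim_inl, Sum.elim_inr] <;> lia

theorem jacobiThetaHalf_term_mul_of_even (a b : ℤ) (x y τ : ℂ) :
    jacobiThetaHalf_term (a + b) (x + y) τ * jacobiThetaHalf_term (a - b) (x - y) τ =
      jacobiThetaHalf_term a (2 * x) (2 * τ) * jacobiTheta₂_term b (2 * y) (2 * τ) := by
  simp only [jacobiThetaHalf_term, jacobiTheta₂_term, ← Complex.exp_add]
  push_cast
  ring_nf

theorem jacobiThetaHalf_term_mul_of_odd (a b : ℤ) (x y τ : ℂ) :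
    jacobiThetaHalf_term (a + b) (x + y) τ * jacobiThetaHalf_term (a - b - 1) (x - y) τ =
      jacobiTheta₂_term a (2 * x) (2 * τ) * jacobiThetaHalf_term b (2 * y) (2 * τ) := by
  simp only [jacobiThetaHalf_term, jacobiTheta₂_term, ← Complex.exp_add]
  push_cast
  ring_nf

theorem jacobiThetaHalf_add_mul_jacobiThetaHalf_sub (x y : ℂ) {τ : ℂ} (hτ : 0 < τ.im) :
    jacobiThetaHalf (x + y) τ * jacobiThetaHalf (x - y) τ =
      jacobiThetaHalf (2 * x) (2 * τ) * jacobiTheta₂ (2 * y) (2 * τ) +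
        jacobiTheta₂ (2 * x) (2 * τ) * jacobiThetaHalf (2 * y) (2 * τ) := by
  have hτ₂ : 0 < (2 * τ).im := by simpa using hτ
  have hasSum_mul {f g : ℤ → ℂ} {a b : ℂ} (hf : HasSum f a) (hg : HasSum g b) :
      HasSum (fun p : ℤ × ℤ => f p.1 * g p.2) (a * b) :=
    hf.mul hg (summable_mul_of_summable_norm hf.summable.norm hg.summable.norm)
  have all := hasSum_mul (hasSum_jacobiThetaHalf_term (x + y) hτ)
    (hasSum_jacobiThetaHalf_term (x - y) hτ)
  have even := hasSum_mul (hasSum_jacobiThetaHalf_term (2 * x) hτ₂)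
    (hasSum_jacobiTheta₂_term (2 * y) hτ₂)
  have odd := hasSum_mul (hasSum_jacobiTheta₂_term (2 * x) hτ₂)
    (hasSum_jacobiThetaHalf_term (2 * y) hτ₂)
  simp only [← jacobiThetaHalf_term_mul_of_even] at even
  simp only [← jacobiThetaHalf_term_mul_of_odd] at odd
  exact (intPairParityEquiv.hasSum_iff.2 all).unique (HasSum.sum even odd)

theorem weierstrassThreeTerm_theta1 {τ : ℂ} (hτ : 0 < τ.im) :
    WeierstrassThreeTerm fun v => theta1 v τ := by
  refine .of_eq_mul_sub_mul (A := fun x => jacobiTheta₂ (2 * x) (2 * τ))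
    (B := fun x => jacobiThetaHalf (2 * x) (2 * τ)) fun x y => ?_
  have hx : 2 * (x + 1 / 2) = 2 * x + 1 := by ring
  rw [theta1_eq_neg_jacobiThetaHalf _ hτ, theta1_eq_neg_jacobiThetaHalf _ hτ, neg_mul_neg,
    add_right_comm, sub_add_eq_add_sub, jacobiThetaHalf_add_mul_jacobiThetaHalf_sub _ _ hτ, hx,
    jacobiThetaHalf_add_one, jacobiTheta₂_add_left]
  ring

theorem weierstrassThreeTerm_thetaR (r : ℝ) {κ : ℝ} (hκ : 0 < κ) :
    WeierstrassThreeTerm (thetaR r κ) :=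
  (weierstrassThreeTerm_theta1 (τ := I * κ) (by simpa using hκ)).comp_div (π * r)

end ThetaSeries

section ShiftedFactorial

variable {R S : Type*} [Ring R] [CommRing S] (θ : R → S)

/-- The shifted factorial `θ(z + a) θ(z + a + 1) ⋯ θ(z + b)`, empty when `b < a`. -/
noncomputable def thetaFactorial (z : R) (a b : ℤ) : S := ∏ u ∈ Finset.Icc a b, θ (z + u)

theorem thetaFactorial_eq_mul_right (z : R) {a b : ℤ} (hab : a ≤ b) :
    thetaFactorial θ z a b = thetaFactorial θ z a (b - 1) * θ (z + b) := by
  rw [thetaFactorial, ← Finset.insert_Icc_sub_one_right_eq_Icc hab,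
    Finset.prod_insert (by simp), mul_comm, thetaFactorial]

theorem thetaFactorial_eq_mul_left (z : R) {a b : ℤ} (hab : a ≤ b) :
    thetaFactorial θ z a b = θ (z + a) * thetaFactorial θ z (a + 1) b := by
  rw [thetaFactorial, ← Finset.insert_Icc_add_one_left_eq_Icc hab,
    Finset.prod_insert (by simp), thetaFactorial]

theorem thetaFactorial_sub_one (z : R) {a b : ℤ} (hab : a + 1 ≤ b) :
    thetaFactorial θ (z - 1) (a + 1) b = θ (z + a) * thetaFactorial θ z (a + 1) (b - 1) := by
  rw [← thetaFactorial_eq_mul_left θ z (by lia : a ≤ b - 1), thetaFactorial, thetaFactorial,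
    ← sub_add_cancel b 1, ← Finset.map_add_right_Icc, Finset.prod_map, add_sub_cancel_right]
  simp

theorem thetaFactorial_zero_one_sub {a b : ℤ} (hab : a + 1 ≤ b) :
    thetaFactorial θ 0 1 (b - a) = thetaFactorial θ 0 1 (b - 1 - a) * θ (b - a) := by
  rw [thetaFactorial_eq_mul_right θ 0 (by lia), sub_right_comm, zero_add, Int.cast_sub]

theorem thetaFactorial_neg_add_one_neg (z : R) {a b : ℤ} (hab : a + 1 ≤ b) :
    thetaFactorial θ z (-b + 1) (-a) = θ (z + 1 - b) * thetaFactorial θ z (-(b - 1) + 1) (-a) := by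
  rw [thetaFactorial_eq_mul_left θ z (by lia), show -(b - 1) + 1 = -b + 1 + 1 by ring]
  congr 2
  push_cast
  abel

end ShiftedFactorial

section LatticePaths

variable {R F : Type*} [CommRing R] [Field F] (θ : R → F) (α β : R) (ℓ k n m : ℤ)

/-- The weight `w(n, m)` for an arbitrary function `θ`. -/
def schlosserWeight : F :=
  θ (α + n + 2 * m) * θ (β + 2 * n) * θ (β + 2 * n - 1) * θ (α - β + 1 - n) * θ (α - β - n) /
    (θ (α + n) * θ (β + 2 * n + m) * θ (β + 2 * n + m - 1) * θ (α - β + 1 + m - n) *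
      θ (α - β + m - n))

/-- The numerator of `W(n, m)` for an arbitrary function `θ`. -/
noncomputable def schlosserNum : F :=
  thetaFactorial θ 0 1 (n - ℓ + m - k) * thetaFactorial θ (α + m + k) (ℓ + 1) n *
    thetaFactorial θ (β + n + ℓ) (k + 1) m * thetaFactorial θ β (2 * ℓ + 1) (2 * n) *
    thetaFactorial θ (α - β) (-n + 1) (-ℓ) * thetaFactorial θ (α - β - 1) (-n + 1) (-ℓ)

/-- The denominator of `W(n, m)` for an arbitrary function `θ`. -/
noncomputable def schlosserDenom : F :=
  thetaFactorial θ 0 1 (n - ℓ) * thetaFactorial θ 0 1 (m - k) * thetaFactorial θ α (ℓ + 1) n *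
    thetaFactorial θ β (2 * ℓ + k + 1) (2 * n + m) *
    thetaFactorial θ (α - β + m) (-n + 1) (-ℓ) * thetaFactorial θ (α - β + k - 1) (-n + 1) (-ℓ)

/-- Schlosser's product formula `W(n, m)` for an arbitrary function `θ`. -/
noncomputable def schlosserProd : F := schlosserNum θ α β ℓ k n m / schlosserDenom θ α β ℓ k n m

/-- The theta factors common to the numerators of `W(n, m)`, `W(n, m - 1)` and
`W(n - 1, m) w(n, m)` over the common denominator
`schlosserDenom θ α β ℓ k n m * θ (α - β + m - n)`. -/
noncomputable def schlosserCommonNum : F :=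
  thetaFactorial θ 0 1 (n - ℓ + m - k - 1) * thetaFactorial θ (α + m + k) (ℓ + 1) (n - 1) *
    thetaFactorial θ (β + n + ℓ) (k + 1) (m - 1) * thetaFactorial θ β (2 * ℓ + 1) (2 * n) *
    thetaFactorial θ (α - β) (-n + 1) (-ℓ) * thetaFactorial θ (α - β - 1) (-n + 1) (-ℓ)

variable {ℓ k n m}

theorem schlosserNum_eq_commonNum_mul (hn : ℓ + 1 ≤ n) (hm : k + 1 ≤ m) :
    schlosserNum θ α β ℓ k n m = schlosserCommonNum θ α β ℓ k n m *
      (θ (n - ℓ + m - k) * θ (α + m + k + n) * θ (β + n + ℓ + m)) := by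
  have h : thetaFactorial θ 0 1 (n - ℓ + m - k) =
      thetaFactorial θ 0 1 (n - ℓ + m - k - 1) * θ (n - ℓ + m - k) := by
    simpa using thetaFactorial_eq_mul_right θ 0 (by lia : 1 ≤ n - ℓ + m - k)
  rw [schlosserNum, schlosserCommonNum, h, thetaFactorial_eq_mul_right θ (α + m + k) hn,
    thetaFactorial_eq_mul_right θ (β + n + ℓ) hm]
  ring

theorem schlosserNum_sub_one_right (hn : ℓ + 1 ≤ n) :
    schlosserNum θ α β ℓ k n (m - 1) =
      schlosserCommonNum θ α β ℓ k n m * θ (α + m + k + ℓ) := by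
  have hα : thetaFactorial θ (α + (m - 1 : ℤ) + k) (ℓ + 1) n =
      θ (α + m + k + ℓ) * thetaFactorial θ (α + m + k) (ℓ + 1) (n - 1) := by
    rw [← thetaFactorial_sub_one θ (α + m + k) hn]
    push_cast
    ring_nf
  rw [schlosserNum, schlosserCommonNum, hα,
    show n - ℓ + (m - 1) - k = n - ℓ + m - k - 1 by ring]
  ring

theorem schlosserNum_sub_one_left_mul (hn : ℓ + 1 ≤ n) (hm : k + 1 ≤ m) :
    schlosserNum θ α β ℓ k (n - 1) m *
        (θ (β + 2 * n) * θ (β + 2 * n - 1) * θ (α - β + 1 - n) * θ (α - β - n)) =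
      schlosserCommonNum θ α β ℓ k n m * θ (β + n + ℓ + k) := by
  have hβ : thetaFactorial θ (β + (n - 1 : ℤ) + ℓ) (k + 1) m =
      θ (β + n + ℓ + k) * thetaFactorial θ (β + n + ℓ) (k + 1) (m - 1) := by
    rw [← thetaFactorial_sub_one θ (β + n + ℓ) hm]
    push_cast
    ring_nf
  have hβ₂ : thetaFactorial θ β (2 * ℓ + 1) (2 * n) =
      thetaFactorial θ β (2 * ℓ + 1) (2 * (n - 1)) * θ (β + 2 * n - 1) * θ (β + 2 * n) := by
    rw [thetaFactorial_eq_mul_right θ β (by lia), thetaFactorial_eq_mul_right θ β (by lia)]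
    push_cast
    ring_nf
  rw [schlosserNum, schlosserCommonNum, hβ, hβ₂, thetaFactorial_neg_add_one_neg θ (α - β) hn,
    thetaFactorial_neg_add_one_neg θ (α - β - 1) hn, sub_add_cancel,
    show n - 1 - ℓ + m - k = n - ℓ + m - k - 1 by ring]
  ring

theorem schlosserDenom_sub_one_right_mul (hn : ℓ + 1 ≤ n) (hm : k + 1 ≤ m) :
    schlosserDenom θ α β ℓ k n (m - 1) *
        (θ (m - k) * θ (β + 2 * n + m) * θ (α - β + m - ℓ)) =
      schlosserDenom θ α β ℓ k n m * θ (α - β + m - n) := by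
  have hβ : thetaFactorial θ β (2 * ℓ + k + 1) (2 * n + m) =
      thetaFactorial θ β (2 * ℓ + k + 1) (2 * n + (m - 1)) * θ (β + 2 * n + m) := by
    rw [thetaFactorial_eq_mul_right θ β (by lia)]
    push_cast
    ring_nf
  have hαβ : thetaFactorial θ (α - β + (m - 1 : ℤ)) (-n + 1) (-ℓ) * θ (α - β + m - ℓ) =
      θ (α - β + m - n) * thetaFactorial θ (α - β + m) (-n + 1) (-ℓ) := by
    have h := thetaFactorial_sub_one θ (α - β + m) (by lia : -n + 1 ≤ -ℓ)
    rw [thetaFactorial_eq_mul_right θ (α - β + m) (by lia : -n + 1 ≤ -ℓ), ← mul_assoc]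
    push_cast at h ⊢
    rw [← sub_eq_add_neg] at h ⊢
    rw [← add_sub_assoc, h]
  rw [schlosserDenom, schlosserDenom, thetaFactorial_zero_one_sub θ hm, hβ]
  linear_combination (thetaFactorial θ 0 1 (n - ℓ) * thetaFactorial θ 0 1 (m - 1 - k) *
    θ (m - k) * thetaFactorial θ α (ℓ + 1) n *
    thetaFactorial θ β (2 * ℓ + k + 1) (2 * n + (m - 1)) * θ (β + 2 * n + m) *
    thetaFactorial θ (α - β + k - 1) (-n + 1) (-ℓ)) * hαβ

theorem schlosserDenom_sub_one_left_mul (hn : ℓ + 1 ≤ n) (hm : k + 1 ≤ m) :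
    schlosserDenom θ α β ℓ k (n - 1) m *
        (θ (n - ℓ) * θ (α + n) * θ (β + 2 * n + m) * θ (β + 2 * n + m - 1) *
          θ (α - β + 1 + m - n) * θ (α - β + k - n)) =
      schlosserDenom θ α β ℓ k n m := by
  have hβ : thetaFactorial θ β (2 * ℓ + k + 1) (2 * n + m) =
      thetaFactorial θ β (2 * ℓ + k + 1) (2 * (n - 1) + m) * θ (β + 2 * n + m - 1) *
        θ (β + 2 * n + m) := by
    rw [thetaFactorial_eq_mul_right θ β (by lia), thetaFactorial_eq_mul_right θ β (by lia)]
    push_cast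
    ring_nf
  rw [schlosserDenom, schlosserDenom, thetaFactorial_zero_one_sub θ hn, hβ,
    thetaFactorial_eq_mul_right θ α hn, thetaFactorial_neg_add_one_neg θ (α - β + m) hn,
    thetaFactorial_neg_add_one_neg θ (α - β + k - 1) hn, sub_add_cancel, add_right_comm (α - β)]
  ring

theorem schlosserProd_eq_div (hn : ℓ + 1 ≤ n) (hm : k + 1 ≤ m) (he : θ (α - β + m - n) ≠ 0) :
    schlosserProd θ α β ℓ k n m = schlosserCommonNum θ α β ℓ k n m *
      (θ (n - ℓ + m - k) * θ (α + m + k + n) * θ (β + n + ℓ + m) * θ (α - β + m - n)) /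
        (schlosserDenom θ α β ℓ k n m * θ (α - β + m - n)) := by
  rw [schlosserProd, schlosserNum_eq_commonNum_mul θ α β hn hm, ← mul_div_mul_right _ _ he,
    mul_assoc, mul_assoc]

theorem schlosserProd_sub_one_right_eq_div (hn : ℓ + 1 ≤ n) (hm : k + 1 ≤ m)
    (hd : schlosserDenom θ α β ℓ k n m ≠ 0) (he : θ (α - β + m - n) ≠ 0) :
    schlosserProd θ α β ℓ k n (m - 1) = schlosserCommonNum θ α β ℓ k n m *
      (θ (m - k) * θ (α + m + k + ℓ) * θ (β + 2 * n + m) * θ (α - β + m - ℓ)) /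
        (schlosserDenom θ α β ℓ k n m * θ (α - β + m - n)) := by
  have hde := mul_ne_zero hd he
  rw [← schlosserDenom_sub_one_right_mul θ α β hn hm] at hde ⊢
  rw [schlosserProd, schlosserNum_sub_one_right θ α β hn,
    div_eq_div_iff (left_ne_zero_of_mul hde) hde]
  ring

theorem schlosserProd_sub_one_left_mul_weight_eq_div (hn : ℓ + 1 ≤ n) (hm : k + 1 ≤ m)
    (hd : schlosserDenom θ α β ℓ k n m ≠ 0) :
    schlosserProd θ α β ℓ k (n - 1) m * schlosserWeight θ α β n m =
      schlosserCommonNum θ α β ℓ k n m *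
        (θ (n - ℓ) * θ (β + n + ℓ + k) * θ (α - β + k - n) * θ (α + n + 2 * m)) /
          (schlosserDenom θ α β ℓ k n m * θ (α - β + m - n)) := by
  rw [← schlosserDenom_sub_one_left_mul θ α β hn hm] at hd ⊢
  simp only [mul_ne_zero_iff] at hd
  obtain ⟨hd', ⟨⟨⟨⟨hn', _⟩, _⟩, _⟩, _⟩, hk⟩ := hd
  rw [schlosserProd, schlosserWeight, div_mul_div_comm]
  field_simp
  linear_combination (θ (α + n + 2 * m) / θ (α - β + m - n)) *
    schlosserNum_sub_one_left_mul θ α β hn hm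

end LatticePaths

theorem WProd_recursion_general {K F : Type*} [Field K] [NeZero (2 : K)] [Field F] {θ : K → F}
    (hθ : WeierstrassThreeTerm θ) (α β : K) {ℓ k n m : ℤ} (hn : ℓ + 1 ≤ n) (hm : k + 1 ≤ m)
    (hd : schlosserDenom θ α β ℓ k n m ≠ 0) (he : θ (α - β + m - n) ≠ 0) :
    schlosserProd θ α β ℓ k n m =
      schlosserProd θ α β ℓ k n (m - 1) +
        schlosserProd θ α β ℓ k (n - 1) m * schlosserWeight θ α β n m := by
  rw [schlosserProd_eq_div θ α β hn hm he,
    schlosserProd_sub_one_right_eq_div θ α β hn hm hd he,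
    schlosserProd_sub_one_left_mul_weight_eq_div θ α β hn hm hd,
    hθ.lattice_path_identity, mul_add, add_div]

theorem WProd_eq_schlosserProd (r κ : ℝ) (α β : ℂ) (ℓ k n m : ℤ) :
    WProd r κ α β ℓ k n m = schlosserProd (thetaR r κ) α β ℓ k n m := by
  simp only [WProd, schlosserProd, schlosserNum, schlosserDenom, thetaFactorial, zero_add,
    Finset.prod_div_distrib, Finset.prod_mul_distrib, div_mul_div_comm]
  ring_nf

theorem wWeight_eq_schlosserWeight (r κ : ℝ) (α β : ℂ) (n m : ℤ) :
    wWeight r κ α β n m = schlosserWeight (thetaR r κ) α β n m :=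
  rfl

theorem WDenomOk.schlosserDenom_ne_zero {r κ : ℝ} {α β : ℂ} {ℓ k n m : ℤ}
    (h : WDenomOk r κ α β ℓ k n m) : schlosserDenom (thetaR r κ) α β ℓ k n m ≠ 0 := by
  obtain ⟨hn, hm, hα, hβ, hαβ⟩ := h
  simp only [schlosserDenom, thetaFactorial, zero_add, mul_ne_zero_iff, Finset.prod_ne_zero_iff]
  exact ⟨⟨⟨⟨⟨hn, hm⟩, hα⟩, hβ⟩, fun u hu => (hαβ u hu).1⟩, fun u hu => (hαβ u hu).2⟩

/-- Theorem 2.1 (Schlosser): the product formula `W` solves the lattice-path recursion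
`W(n,m) = W(n,m−1) + W(n−1,m)·w(n,m)`. -/
theorem WProd_recursion (r κ : ℝ) (hr : 0 < r) (hκ : 0 < κ) (α β : ℂ) (ℓ k n m : ℤ)
    (hn : ℓ + 1 ≤ n) (hm : k + 1 ≤ m)
    (h1 : WDenomOk r κ α β ℓ k n m) (h2 : WDenomOk r κ α β ℓ k n (m - 1))
    (h3 : WDenomOk r κ α β ℓ k (n - 1) m) (h4 : wDenomOk r κ α β n m) :
    WProd r κ α β ℓ k n m
      = WProd r κ α β ℓ k n (m - 1) + WProd r κ α β ℓ k (n - 1) m * wWeight r κ α β n m := by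
  obtain ⟨-, -, -, -, he⟩ := h4
  simpa only [WProd_eq_schlosserProd, wWeight_eq_schlosserWeight] using
    WProd_recursion_general (weierstrassThreeTerm_thetaR r hκ) α β hn hm
      h1.schlosserDenom_ne_zero he
end

section
/- For every κ > 0 and every real v with 0 < v < 1, the value ϑ₁(v; iκ) is a positive real number; and for every real v with −1 < v < 0, ϑ₁(v; iκ) is a negative real number. -/
open scoped Real

/-!
For `κ ≥ 1` the leading term of the sine series dominates the rest, because
`|sin ((2n+1)πv)| ≤ (2n+1) sin (πv)` while the Gaussian weights decay at least like `exp (-πn)`.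
For `κ ≤ 1` the transformation `τ ↦ -1/τ` turns `ϑ₁(v; iκ)` into a positive multiple of the
alternating Gaussian sum `∑ (-1)^n exp (-(π/κ)(n + w)²)` over `ℤ`, where `w = v - 1/2`. Pairing the
index `n ≥ 0` with `-(n+1)` gives the terms `exp (-(π/κ)(n + w)²) (1 - x^(2n+1))` with
`x = exp (-(π/κ)(1 - 2w))`. By the symmetry `v ↦ 1 - v` one may take `0 ≤ w < 1/2`, and then
`1 - x^(2n+1) ≤ (2n+1)(1 - x)` makes the leading term dominate in the same way.
-/

section LeadingTerm

lemma tsum_pos_of_abs_le_geometric {c : ℕ → ℝ} {r : ℝ} (hr : r < 1 / 2) (hc0 : 0 < c 0)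
    (hc : ∀ k, |c k| ≤ r ^ k * c 0) : 0 < ∑' k, c k := by
  have hr0 : 0 ≤ r := by
    refine nonneg_of_mul_nonneg_left ((abs_nonneg (c 1)).trans ?_) hc0
    simpa only [pow_one] using hc 1
  have geom : HasSum (fun k : ℕ ↦ r ^ k * c 0) ((1 - r)⁻¹ * c 0) :=
    (hasSum_geometric_of_lt_one hr0 (by linarith)).mul_right _
  have tail_geom : HasSum (fun k : ℕ ↦ r ^ (k + 1) * c 0) (r * ((1 - r)⁻¹ * c 0)) := by
    simpa only [pow_succ', mul_assoc] using geom.mul_left r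
  have tail_le : |∑' k, c (k + 1)| ≤ r * ((1 - r)⁻¹ * c 0) :=
    tsum_of_norm_bounded (f := fun k ↦ c (k + 1)) tail_geom fun k ↦ hc (k + 1)
  have tail_lt : r * ((1 - r)⁻¹ * c 0) < c 0 := by
    rw [← mul_assoc, ← div_eq_mul_inv]
    exact mul_lt_of_lt_one_left hc0 ((div_lt_one (by linarith)).2 (by linarith))
  rw [(geom.summable.of_norm_bounded hc).tsum_eq_zero_add]
  linarith [neg_le_of_abs_le tail_le]

lemma two_mul_add_one_le_three_pow (n : ℕ) : (2 * n + 1 : ℝ) ≤ 3 ^ n := by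
  have := one_add_mul_sub_le_pow (a := (3 : ℝ)) (by norm_num) n
  linarith

lemma exp_neg_pi_lt : Real.exp (-π) < 1 / 6 := by
  have h : (6 : ℝ) < Real.exp π :=
    calc (6 : ℝ) < 2 ^ 3 := by norm_num
      _ < Real.exp 1 ^ 3 := by gcongr; exact Real.exp_one_gt_two
      _ = Real.exp 3 := by rw [← Real.exp_nat_mul]; norm_num
      _ < Real.exp π := Real.exp_lt_exp.2 Real.pi_gt_three
  rw [Real.exp_neg, ← one_div]
  exact one_div_lt_one_div_of_lt (by norm_num) h

lemma exp_neg_mul_sq_le {A w : ℝ} (hA : π ≤ A) (hw : 0 ≤ w) (k : ℕ) :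
    Real.exp (-A * (k + w) ^ 2) ≤ Real.exp (-π) ^ k * Real.exp (-A * w ^ 2) := by
  rw [← Real.exp_nat_mul, ← Real.exp_add, Real.exp_le_exp]
  have hA0 : 0 < A := Real.pi_pos.trans_le hA
  have hk : (k : ℝ) ≤ (k : ℝ) ^ 2 := mod_cast Nat.le_self_pow two_ne_zero k
  have linear_le : π * k ≤ A * (k : ℝ) ^ 2 := by gcongr
  have cross_nonneg : 0 ≤ A * (2 * k * w) := by positivity
  linarith

lemma tsum_exp_neg_mul_sq_mul_pos {A w : ℝ} (hA : π ≤ A) (hw : 0 ≤ w) {b : ℕ → ℝ}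
    (hb0 : 0 < b 0) (hb : ∀ k : ℕ, |b k| ≤ (2 * k + 1) * b 0) :
    0 < ∑' k : ℕ, Real.exp (-A * (k + w) ^ 2) * b k := by
  refine tsum_pos_of_abs_le_geometric (r := 3 * Real.exp (-π)) (by linarith [exp_neg_pi_lt])
    (by positivity) fun k ↦ ?_
  calc |Real.exp (-A * (k + w) ^ 2) * b k|
      = Real.exp (-A * (k + w) ^ 2) * |b k| := by rw [abs_mul, Real.abs_exp]
    _ ≤ (Real.exp (-π) ^ k * Real.exp (-A * w ^ 2)) * (3 ^ k * b 0) := by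
        gcongr
        · exact exp_neg_mul_sq_le hA hw k
        · exact (hb k).trans (by gcongr; exact two_mul_add_one_le_three_pow k)
    _ = (3 * Real.exp (-π)) ^ k * (Real.exp (-A * ((0 : ℕ) + w) ^ 2) * b 0) := by
        rw [Nat.cast_zero, zero_add]; ring

lemma abs_sin_nat_mul_le (n : ℕ) (x : ℝ) : |Real.sin (n * x)| ≤ n * |Real.sin x| := by
  induction n with
  | zero => simp
  | succ n ih =>
    calc |Real.sin ((n + 1 : ℕ) * x)|
        = |Real.sin (n * x) * Real.cos x + Real.cos (n * x) * Real.sin x| := by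
          rw [Nat.cast_succ, add_one_mul, Real.sin_add]
      _ ≤ |Real.sin (n * x)| * |Real.cos x| + |Real.cos (n * x)| * |Real.sin x| := by
          simpa only [abs_mul] using
            abs_add_le (Real.sin (n * x) * Real.cos x) (Real.cos (n * x) * Real.sin x)
      _ ≤ n * |Real.sin x| * 1 + 1 * |Real.sin x| := by
          gcongr
          · exact Real.abs_cos_le_one x
          · exact Real.abs_cos_le_one _
      _ = (n + 1 : ℕ) * |Real.sin x| := by push_cast; ring

end LeadingTerm

section Symmetries

lemma theta1_neg (v τ : ℂ) : theta1 (-v) τ = -theta1 v τ := by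
  simp only [theta1, mul_neg, Complex.sin_neg, tsum_neg]

lemma theta1_one_sub (v τ : ℂ) : theta1 (1 - v) τ = theta1 v τ := by
  have sin_eq (n : ℕ) : Complex.sin ((2 * n + 1) * π * (1 - v)) =
      Complex.sin ((2 * n + 1) * π * v) := by
    rw [show (2 * (n : ℂ) + 1) * π * (1 - v) = π - (2 * n + 1) * π * v + n * (2 * π) by ring,
      Complex.sin_add_nat_mul_two_pi, Complex.sin_pi_sub]
  simp only [theta1, sin_eq]

end Symmetries

section ImaginaryTransformation

lemma jacobiTheta₂_eq_tsum_nat (z : ℂ) {τ : ℂ} (hτ : 0 < τ.im) : jacobiTheta₂ z τ =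
    ∑' n : ℕ, (jacobiTheta₂_term n z τ + jacobiTheta₂_term (-(n + 1)) z τ) :=
  (hasSum_jacobiTheta₂_term z hτ).nat_add_neg_add_one.tsum_eq.symm

lemma theta1_eq_jacobiTheta₂ (v : ℂ) {τ : ℂ} (hτ : 0 < τ.im) : theta1 v τ =
    Complex.exp (π * Complex.I * τ / 4 + π * Complex.I * (v - 1 / 2)) *
      jacobiTheta₂ (v - 1 / 2 + τ / 2) τ := by
  rw [jacobiTheta₂_eq_tsum_nat _ hτ, theta1, ← tsum_mul_left, ← tsum_mul_left]
  refine tsum_congr fun n ↦ ?_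
  have sin_eq_cos : (-1 : ℂ) ^ n * Complex.sin ((2 * n + 1) * π * v) =
      Complex.cos ((2 * n + 1) * π * (v - 1 / 2)) := by
    rw [show (2 * (n : ℂ) + 1) * π * (v - 1 / 2) = (2 * n + 1) * π * v - π / 2 - n * π by ring,
      Complex.cos_antiperiodic.sub_nat_mul_eq, Complex.cos_sub_pi_div_two]
  calc 2 * ((-1 : ℂ) ^ n * Complex.exp (π * Complex.I * τ * (n + 1 / 2) ^ 2) *
        Complex.sin ((2 * n + 1) * π * v))
      = Complex.exp (π * Complex.I * τ * (n + 1 / 2) ^ 2) *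
          (2 * Complex.cos ((2 * n + 1) * π * (v - 1 / 2))) := by rw [← sin_eq_cos]; ring
    _ = _ := by
      simp only [Complex.two_cos, mul_add, jacobiTheta₂_term, ← Complex.exp_add]
      push_cast
      congr 2 <;> ring

lemma theta1_eq_jacobiTheta₂_neg_inv (v : ℂ) {τ : ℂ} (hτ : 0 < τ.im) : theta1 v τ =
    1 / (-Complex.I * τ) ^ (1 / 2 : ℂ) *
      (Complex.exp (-π * Complex.I * (v - 1 / 2) ^ 2 / τ) *
        jacobiTheta₂ (1 / 2 - (v - 1 / 2) / τ) (-1 / τ)) := by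
  have hτ0 : τ ≠ 0 := by rintro rfl; simp at hτ
  have arg_eq : -((v - 1 / 2 + τ / 2) / τ) + 1 = 1 / 2 - (v - 1 / 2) / τ := by
    field_simp
    ring
  have prefactor_eq : Complex.exp (π * Complex.I * τ / 4 + π * Complex.I * (v - 1 / 2)) *
      Complex.exp (-π * Complex.I * (v - 1 / 2 + τ / 2) ^ 2 / τ) =
      Complex.exp (-π * Complex.I * (v - 1 / 2) ^ 2 / τ) := by
    rw [← Complex.exp_add]
    congr 1
    field_simp
    ring
  rw [theta1_eq_jacobiTheta₂ v hτ, jacobiTheta₂_functional_equation, ← jacobiTheta₂_neg_left,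
    ← jacobiTheta₂_add_left, arg_eq, ← prefactor_eq]
  ring

lemma exp_mul_jacobiTheta₂_term_half_sub (w τ : ℂ) (n : ℤ) :
    Complex.exp (-π * Complex.I * w ^ 2 / τ) * jacobiTheta₂_term n (1 / 2 - w / τ) (-1 / τ) =
      (-1) ^ n * Complex.exp (-π * Complex.I * (n + w) ^ 2 / τ) := by
  have sign_eq : (-1 : ℂ) ^ n = Complex.exp (n * (π * Complex.I)) := by
    rw [Complex.exp_int_mul, Complex.exp_pi_mul_I]
  rw [sign_eq, jacobiTheta₂_term, ← Complex.exp_add, ← Complex.exp_add]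
  congr 1
  ring

theorem theta1_eq_tsum_neg_inv (v : ℂ) {τ : ℂ} (hτ : 0 < τ.im) : theta1 v τ =
    1 / (-Complex.I * τ) ^ (1 / 2 : ℂ) * ∑' n : ℕ, (-1) ^ n *
      (Complex.exp (-π * Complex.I * (n + (v - 1 / 2)) ^ 2 / τ) -
        Complex.exp (-π * Complex.I * (n + 1 - (v - 1 / 2)) ^ 2 / τ)) := by
  have him : 0 < (-1 / τ).im := by
    simpa only [neg_div, one_div, inv_neg] using UpperHalfPlane.im_inv_neg_coe_pos ⟨τ, hτ⟩
  rw [theta1_eq_jacobiTheta₂_neg_inv v hτ, jacobiTheta₂_eq_tsum_nat _ him, ← tsum_mul_left]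
  congr 1
  refine tsum_congr fun n ↦ ?_
  have sign_eq : (-1 : ℂ) ^ (-((n : ℤ) + 1)) = -(-1) ^ n := by
    rw [zpow_neg, ← inv_zpow, inv_neg_one, zpow_add_one₀ (by norm_num), zpow_natCast, mul_neg_one]
  rw [mul_add, exp_mul_jacobiTheta₂_term_half_sub, exp_mul_jacobiTheta₂_term_half_sub, sign_eq,
    zpow_natCast]
  push_cast
  ring_nf

end ImaginaryTransformation

section Positivity

open scoped ComplexOrder

lemma theta1_I_mul_eq_ofReal (v κ : ℝ) : theta1 v (Complex.I * κ) =
    ((2 * ∑' n : ℕ, Real.exp (-(π * κ) * (n + 1 / 2) ^ 2) *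
      ((-1) ^ n * Real.sin ((2 * n + 1 : ℕ) * (π * v))) : ℝ) : ℂ) := by
  rw [theta1]
  push_cast
  congr 1
  refine tsum_congr fun n ↦ ?_
  have exponent_eq : π * Complex.I * (Complex.I * κ) * ((n : ℂ) + 1 / 2) ^ 2 =
      -(π * κ) * (n + 1 / 2) ^ 2 := by
    linear_combination (π * κ * ((n : ℂ) + 1 / 2) ^ 2) * Complex.I_mul_I
  rw [exponent_eq]
  ring_nf

lemma theta1_I_mul_eq_ofReal_inv (v : ℝ) {κ : ℝ} (hκ : 0 < κ) : theta1 v (Complex.I * κ) =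
    ((1 / κ ^ (1 / 2 : ℝ) * ∑' n : ℕ, (-1) ^ n * (Real.exp (-(π / κ) * (n + (v - 1 / 2)) ^ 2) -
      Real.exp (-(π / κ) * (n + 1 - (v - 1 / 2)) ^ 2)) : ℝ) : ℂ) := by
  have exponent_eq (z : ℂ) : -π * Complex.I * z ^ 2 / (Complex.I * κ) = -(π / κ) * z ^ 2 := by
    field_simp
  have root_eq : (-Complex.I * (Complex.I * κ)) ^ (1 / 2 : ℂ) = ((κ ^ (1 / 2 : ℝ) : ℝ) : ℂ) := by
    rw [← mul_assoc, neg_mul, Complex.I_mul_I, neg_neg, one_mul, Complex.ofReal_cpow hκ.le]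
    norm_num
  rw [theta1_eq_tsum_neg_inv v (by simpa using hκ), root_eq]
  simp only [exponent_eq]
  push_cast
  rfl

lemma theta1_pos_of_one_le {κ v : ℝ} (hκ : 1 ≤ κ) (hv0 : 0 < v) (hv1 : v < 1) :
    0 < theta1 v (Complex.I * κ) := by
  have hsin : 0 < Real.sin (π * v) :=
    Real.sin_pos_of_pos_of_lt_pi (by positivity) (mul_lt_of_lt_one_right Real.pi_pos hv1)
  rw [theta1_I_mul_eq_ofReal, Complex.zero_lt_real]
  refine mul_pos two_pos (tsum_exp_neg_mul_sq_mul_pos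
    (le_mul_of_one_le_right Real.pi_pos.le hκ) (by norm_num) (by simpa using hsin) fun k ↦ ?_)
  simpa [abs_mul, abs_of_pos hsin] using abs_sin_nat_mul_le (2 * k + 1) (π * v)

lemma exp_neg_mul_sq_sub_exp_neg_mul_sq (A w : ℝ) (n : ℕ) :
    Real.exp (-A * (n + w) ^ 2) - Real.exp (-A * (n + 1 - w) ^ 2) =
      Real.exp (-A * (n + w) ^ 2) * (1 - Real.exp (-A * (1 - 2 * w)) ^ (2 * n + 1)) := by
  rw [← Real.exp_nat_mul, mul_sub, mul_one, ← Real.exp_add]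
  congr 2
  push_cast
  ring

lemma theta1_pos_of_le_one {κ v : ℝ} (hκ : 0 < κ) (hκ1 : κ ≤ 1) (hv : 1 / 2 ≤ v) (hv1 : v < 1) :
    0 < theta1 v (Complex.I * κ) := by
  have hA : π ≤ π / κ := le_div_self Real.pi_pos.le hκ hκ1
  set x := Real.exp (-(π / κ) * (1 - 2 * (v - 1 / 2))) with hx
  have hx0 : 0 ≤ x := Real.exp_nonneg _
  have hx1 : x < 1 :=
    Real.exp_lt_one_iff.2 (mul_neg_of_neg_of_pos (by linarith [Real.pi_pos]) (by linarith))
  rw [theta1_I_mul_eq_ofReal_inv v hκ, Complex.zero_lt_real]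
  simp only [exp_neg_mul_sq_sub_exp_neg_mul_sq, ← hx, mul_left_comm ((-1 : ℝ) ^ _)]
  refine mul_pos (by positivity) (tsum_exp_neg_mul_sq_mul_pos hA (by linarith)
    (by simpa using hx1) fun k ↦ ?_)
  have hxk : x ^ (2 * k + 1) ≤ 1 := pow_le_one₀ hx0 hx1.le
  have bernoulli : 1 + (2 * k + 1 : ℕ) * (x - 1) ≤ x ^ (2 * k + 1) :=
    one_add_mul_sub_le_pow (by linarith) _
  push_cast at bernoulli
  simp only [abs_mul, abs_pow, abs_neg, abs_one, one_pow, one_mul, pow_zero, mul_zero, zero_add,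
    pow_one, abs_of_nonneg (sub_nonneg.2 hxk)]
  linarith

theorem theta1_pos {κ v : ℝ} (hκ : 0 < κ) (hv0 : 0 < v) (hv1 : v < 1) :
    0 < theta1 v (Complex.I * κ) := by
  rcases le_total 1 κ with h1κ | hκ1
  · exact theta1_pos_of_one_le h1κ hv0 hv1
  rcases le_total (1 / 2) v with hv | hv
  · exact theta1_pos_of_le_one hκ hκ1 hv hv1
  · rw [← theta1_one_sub]
    exact_mod_cast theta1_pos_of_le_one (v := 1 - v) hκ hκ1 (by linarith) (by linarith)

end Positivity

/-- For every `κ > 0`, `ϑ₁(v; iκ)` is a positive real number for real `0 < v < 1`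
and a negative real number for real `−1 < v < 0`. -/
theorem theta1_sign (κ : ℝ) (hκ : 0 < κ) (v : ℝ) :
    (0 < v → v < 1 → ∃ c : ℝ, 0 < c ∧ theta1 (v : ℂ) (Complex.I * κ) = (c : ℂ)) ∧
    (-1 < v → v < 0 → ∃ c : ℝ, c < 0 ∧ theta1 (v : ℂ) (Complex.I * κ) = (c : ℂ)) := by
  have exists_pos {u : ℝ} (hu0 : 0 < u) (hu1 : u < 1) :
      ∃ c : ℝ, 0 < c ∧ theta1 u (Complex.I * κ) = c := by
    obtain ⟨c, hc, h⟩ := RCLike.pos_iff_exists_ofReal.1 (theta1_pos hκ hu0 hu1)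
    exact ⟨c, hc, h.symm⟩
  refine ⟨exists_pos, fun hv hv0 ↦ ?_⟩
  obtain ⟨c, hc, h⟩ := exists_pos (u := -v) (by linarith) (by linarith)
  refine ⟨-c, neg_neg_of_pos hc, ?_⟩
  rw [Complex.ofReal_neg, ← h, Complex.ofReal_neg, theta1_neg, neg_neg]
end

section
/- Let (s,v) ∈ Λ̄₂ and let (T_j) be a sequence of positive integers tending to infinity and (t_j, x_j) ∈ Λ_{2T_j} be lattice points with t_j/T_j → s and x_j/T_j → v as j → ∞. Then −(1/T_j)·log P̃_{2T_j}(t_j, x_j) converges to I(s,v) as j → ∞, where I(s,v) = 3∫_0^{(1−s−v)/6} log[sin(π(φ+1/6))/sin(π(1/6−φ))] dφ + 6∫_0^{(1−s+v)/6} log[sin(π(φ+1/6))/sin(π(1/6−φ))] dφ + 6∫_0^{(1−s)/3} log[cos(π(φ+1/6))/cos(π(1/6−φ))] dφ. In other words, the large deviation principle holds for the simplified trigonometric excursion process with rate function I. -/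
open scoped Real
open Filter

/-- The spatio-temporal region `Λ_{2T}` of the excursion process. -/
def LambdaSet (T : ℕ) : Set (ℤ × ℤ) :=
  {p | Even (p.1 + p.2) ∧
    ((0 ≤ p.1 ∧ p.1 ≤ (T : ℤ) ∧ -p.1 ≤ p.2 ∧ p.2 ≤ p.1) ∨
     ((T : ℤ) + 1 ≤ p.1 ∧ p.1 ≤ 2 * (T : ℤ) ∧ p.1 - 2 * (T : ℤ) ≤ p.2 ∧
       p.2 ≤ 2 * (T : ℤ) - p.1))}

/-- The normalization constant `c̃₂(t;T)`. -/
noncomputable def ctilde2 (T : ℕ) (t : ℤ) : ℝ :=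
  ((∏ n ∈ Finset.Icc (1 : ℤ) t, Real.sin ((n : ℝ) * π / (3 * T))) *
      (∏ n ∈ Finset.Icc (1 : ℤ) (2 * (T : ℤ) - t), Real.sin ((n : ℝ) * π / (3 * T))) /
      ∏ n ∈ Finset.Icc (1 : ℤ) (2 * (T : ℤ)), Real.sin ((n : ℝ) * π / (3 * T))) *
    ∏ n ∈ Finset.Icc (1 : ℤ) (T : ℤ),
      Real.sin ((n : ℝ) * π / (3 * T)) ^ 2 / Real.cos ((2 * (n : ℝ) - (T : ℝ) - 1) * π / (6 * T))

open Classical in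
/-- The single-time distribution `P̃_{2T}(t,x)` of the simplified trigonometric
excursion process at the special parameters `πr = 3T`, `α₀/r = π/2`. -/
noncomputable def Ptilde (T : ℕ) (t x : ℤ) : ℝ :=
  if (t, x) ∈ LambdaSet T then
    ctilde2 T t *
      (∏ n ∈ Finset.Icc (1 : ℤ) ((t + x) / 2),
        Real.cos ((2 * (n : ℝ) + 3 * (T : ℝ) - 2 * (t : ℝ) - 1) * π / (6 * T)) /
          Real.sin ((n : ℝ) * π / (3 * T))) *
      (∏ n ∈ Finset.Icc (1 : ℤ) ((t - x) / 2), 1 / Real.sin ((n : ℝ) * π / (3 * T))) *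
      (∏ n ∈ Finset.Icc (1 : ℤ) ((2 * (T : ℤ) - t - x) / 2),
        Real.cos ((2 * (n : ℝ) + 2 * (t : ℝ) - (T : ℝ) - 1) * π / (6 * T)) /
          Real.sin ((n : ℝ) * π / (3 * T))) *
      (∏ n ∈ Finset.Icc (1 : ℤ) ((2 * (T : ℤ) - t + x) / 2),
        1 / Real.sin ((n : ℝ) * π / (3 * T)))
  else 0

/-- The scaled region `Λ̄₂`. -/
def LambdaBar2 : Set (ℝ × ℝ) :=
  {p | (0 ≤ p.1 ∧ p.1 ≤ 1 ∧ -p.1 ≤ p.2 ∧ p.2 ≤ p.1) ∨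
       (1 < p.1 ∧ p.1 ≤ 2 ∧ -(2 - p.1) ≤ p.2 ∧ p.2 ≤ 2 - p.1)}

/-- The rate function `I(s,v)` in its integral representation. -/
noncomputable def rateI (s v : ℝ) : ℝ :=
  3 * (∫ φ in (0 : ℝ)..((1 - s - v) / 6),
        Real.log (Real.sin (π * (φ + 1 / 6)) / Real.sin (π * (1 / 6 - φ)))) +
  6 * (∫ φ in (0 : ℝ)..((1 - s + v) / 6),
        Real.log (Real.sin (π * (φ + 1 / 6)) / Real.sin (π * (1 / 6 - φ)))) +
  6 * (∫ φ in (0 : ℝ)..((1 - s) / 3),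
        Real.log (Real.cos (π * (φ + 1 / 6)) / Real.cos (π * (1 / 6 - φ))))

/-!
Every factor of `Ptilde` is a sine at a node of a grid of step `h = π / (3 * T)`: after a
quarter-period shift, each cosine product telescopes into a quotient of products
`∏ sin ((n + 1 / 2) * h)`. Hence `h * log` of each factor product is a Riemann sum of `log ∘ sin`.
It converges to `∫₀ˣ log ∘ sin` although the integrand is singular at `0`, since `|log ∘ sin|` is
bounded by an integrable decreasing function. The rate is therefore a linear combination of values
of this primitive, and so is `rateI`; the two agree up to constants involving only the angles `π/6`,
`π/3` and `2π/3`, which cancel by the duplication formula for the primitive.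
-/

namespace SimplifiedTrigLDP

open MeasureTheory Set
open scoped Topology

section RiemannSums

variable {E : Type*} [NormedAddCommGroup E]

lemma integral_comp_natFloor [NormedSpace ℝ E] [CompleteSpace E] (G : ℕ → E) (m : ℕ) :
    ∫ y in (0 : ℝ)..m, G ⌊y⌋₊ = ∑ n ∈ Finset.range m, G n := by
  have eqOn_const (k : ℕ) :
      EqOn (fun _ : ℝ => G k) (fun y : ℝ => G ⌊y⌋₊) (uIoo (k : ℝ) ((k + 1 : ℕ) : ℝ)) := by
    intro y hy
    rw [uIoo_of_le (by push_cast; linarith), Nat.cast_succ] at hy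
    have : ⌊y⌋₊ = k := (Nat.floor_eq_iff (k.cast_nonneg.trans hy.1.le)).2 ⟨hy.1.le, hy.2⟩
    simp only [this]
  have hsum := intervalIntegral.sum_integral_adjacent_intervals (f := fun y : ℝ => G ⌊y⌋₊)
    (μ := volume) (a := fun k : ℕ => (k : ℝ)) (n := m)
    fun k _ => intervalIntegrable_const.congr_uIoo (eqOn_const k)
  rw [← Nat.cast_zero, ← hsum]
  refine Finset.sum_congr rfl fun k _ => ?_
  rw [← intervalIntegral.integral_congr_uIoo (eqOn_const k)]
  simp

lemma smul_sum_eq_integral_natFloor [NormedSpace ℝ E] [CompleteSpace E] (f : ℝ → E) (θ : ℝ)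
    {h : ℝ} (hh : h ≠ 0) (m : ℕ) :
    h • ∑ n ∈ Finset.range m, f ((n + θ) * h) =
      ∫ u in (0 : ℝ)..m * h, f ((⌊u / h⌋₊ + θ) * h) := by
  rw [intervalIntegral.integral_comp_div (fun y => f ((⌊y⌋₊ + θ) * h)) hh, zero_div,
    mul_div_cancel_right₀ _ hh, integral_comp_natFloor fun n => f ((n + θ) * h)]

variable {ι : Type*} {l : Filter ι} {h : ι → ℝ} {θ : ℝ}

lemma tendsto_natFloor_div_add_mul (hh : Tendsto h l (𝓝[>] 0)) (θ : ℝ) {u : ℝ} (hu : 0 ≤ u) :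
    Tendsto (fun j => (⌊u / h j⌋₊ + θ) * h j) l (𝓝 u) := by
  have hfloor := (tendsto_nat_floor_mul_div_atTop hu).comp (tendsto_inv_nhdsGT_zero.comp hh)
  have hshift := (tendsto_nhds_of_tendsto_nhdsWithin hh).const_mul θ
  simpa [Function.comp_def, div_eq_mul_inv, add_mul] using hfloor.add hshift

lemma mul_le_natFloor_div_add_mul (hθ : θ ∈ Ioc 0 1) (u : ℝ) {h : ℝ} (hh : 0 < h) :
    θ * u ≤ (⌊u / h⌋₊ + θ) * h := by
  have hfloor : u / h < ⌊u / h⌋₊ + 1 := Nat.lt_floor_add_one _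
  have hθfloor : θ * ⌊u / h⌋₊ ≤ ⌊u / h⌋₊ := mul_le_of_le_one_left (Nat.cast_nonneg _) hθ.2
  calc θ * u = θ * (u / h) * h := by field_simp
    _ ≤ θ * (⌊u / h⌋₊ + 1) * h := by have := hθ.1; gcongr
    _ ≤ (⌊u / h⌋₊ + θ) * h := by gcongr; linarith

lemma natFloor_div_add_mul_le (hθ : θ ≤ 1) {u h : ℝ} (hu : 0 ≤ u) (hh : 0 < h) :
    (⌊u / h⌋₊ + θ) * h ≤ u + h := by
  have hfloor : (⌊u / h⌋₊ : ℝ) * h ≤ u := (le_div_iff₀ hh).1 (Nat.floor_le (by positivity))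
  nlinarith

lemma norm_indicator_comp_natFloor_le {f : ℝ → E} {g : ℝ → ℝ} {b : ℝ}
    (hg : AntitoneOn g (Ioo 0 b)) (hfg : ∀ x ∈ Ioo 0 b, ‖f x‖ ≤ g x) (hθ : θ ∈ Ioc 0 1)
    {c u h : ℝ} (hu : 0 < u) (hh : 0 < h) (hcb : c + h < b) :
    ‖{u | u ≤ c}.indicator (fun u => f ((⌊u / h⌋₊ + θ) * h)) u‖ ≤ |g (θ * u)| := by
  by_cases huc : u ≤ c
  · have hlower := mul_le_natFloor_div_add_mul hθ u hh
    have hupper : (⌊u / h⌋₊ + θ) * h < b := by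
      linarith [natFloor_div_add_mul_le hθ.2 hu.le hh]
    have hpos : 0 < θ * u := mul_pos hθ.1 hu
    have hmem : (⌊u / h⌋₊ + θ) * h ∈ Ioo 0 b := ⟨hpos.trans_le hlower, hupper⟩
    rw [indicator_of_mem (by exact huc)]
    exact (hfg _ hmem).trans
      ((hg ⟨hpos, hlower.trans_lt hupper⟩ hmem hlower).trans (le_abs_self _))
  · rw [indicator_of_notMem (by exact huc), norm_zero]
    exact abs_nonneg _

lemma tendsto_indicator_comp_natFloor {f : ℝ → E} {c : ι → ℝ} {a u : ℝ} (hu : 0 ≤ u)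
    (hua : u ≠ a) (hf : u < a → ContinuousAt f u) (hh : Tendsto h l (𝓝[>] 0))
    (hc : Tendsto c l (𝓝 a)) (θ : ℝ) :
    Tendsto (fun j => {u | u ≤ c j}.indicator (fun u => f ((⌊u / h j⌋₊ + θ) * h j)) u) l
      (𝓝 ({u | u ≤ a}.indicator f u)) := by
  rcases hua.lt_or_gt with hlt | hgt
  · rw [indicator_of_mem (by exact hlt.le)]
    refine ((hf hlt).tendsto.comp (tendsto_natFloor_div_add_mul hh θ hu)).congr' ?_
    filter_upwards [hc.eventually_const_lt hlt] with j hj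
    rw [indicator_of_mem (by exact hj.le), Function.comp_apply]
  · rw [indicator_of_notMem (by simpa using hgt)]
    refine tendsto_const_nhds.congr' ?_
    filter_upwards [hc.eventually_lt_const hgt] with j hj
    rw [indicator_of_notMem (by simpa using hj)]

theorem tendsto_smul_sum_integral_of_norm_le_antitone [NormedSpace ℝ E] [CompleteSpace E]
    [l.NeBot] [l.IsCountablyGenerated] {f : ℝ → E} {g : ℝ → ℝ} {a b : ℝ}
    (hf : ContinuousOn f (Ioo 0 b)) (hg : AntitoneOn g (Ioo 0 b)) (hfg : ∀ x ∈ Ioo 0 b, ‖f x‖ ≤ g x)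
    (hgi : IntervalIntegrable g volume 0 b) (hθ : θ ∈ Ioc 0 1) (hh : Tendsto h l (𝓝[>] 0))
    {m : ι → ℕ} (hm : Tendsto (fun j => m j * h j) l (𝓝 a)) (hab : a < b) :
    Tendsto (fun j => h j • ∑ n ∈ Finset.range (m j), f ((n + θ) * h j)) l
      (𝓝 (∫ u in 0..a, f u)) := by
  have hpos : ∀ᶠ j in l, 0 < h j := hh.eventually self_mem_nhdsWithin
  have hm0 : ∀ᶠ j in l, 0 ≤ m j * h j := hpos.mono fun j hj => by positivity
  have ha : 0 ≤ a := ge_of_tendsto hm hm0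
  have hb : 0 < b := ha.trans_lt hab
  have hmb : ∀ᶠ j in l, m j * h j + h j < b := by
    refine (hm.add (tendsto_nhds_of_tendsto_nhdsWithin hh)).eventually_lt_const ?_
    rwa [add_zero]
  have hbound : IntervalIntegrable (fun u => |g (θ * u)|) volume 0 b := by
    have hscaled : IntervalIntegrable (fun u => g (θ * u)) volume 0 (b / θ) := by
      simpa only [zero_div] using hgi.comp_mul_left (c := θ)
    refine (hscaled.mono_set ?_).abs
    rw [uIcc_of_le hb.le, uIcc_of_le (div_nonneg hb.le hθ.1.le)]
    exact Icc_subset_Icc_right (le_div_self hb.le hθ.1 hθ.2)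
  have hlim := intervalIntegral.tendsto_integral_filter_of_dominated_convergence
    (F := fun j => {u | u ≤ m j * h j}.indicator fun u => f ((⌊u / h j⌋₊ + θ) * h j))
    (f := {u | u ≤ a}.indicator f) (a := 0) (b := b) (l := l) (μ := volume) _
    (.of_forall fun j => ?_) ?_ hbound ?_
  · rw [intervalIntegral.integral_indicator ⟨ha, hab.le⟩] at hlim
    refine hlim.congr' ?_
    filter_upwards [hpos, hm0, hmb] with j hj h0 hjb
    rw [intervalIntegral.integral_indicator ⟨h0, by linarith⟩,
      smul_sum_eq_integral_natFloor f θ hj.ne']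
  · have hnode : StronglyMeasurable fun u => f ((⌊u / h j⌋₊ + θ) * h j) :=
      (StronglyMeasurable.of_discrete (f := fun n : ℕ => f ((n + θ) * h j))).comp_measurable
        (Nat.measurable_floor.comp (measurable_id.div_const _))
    exact (hnode.indicator measurableSet_Iic).aestronglyMeasurable
  · filter_upwards [hpos, hmb] with j hj hjb
    refine .of_forall fun u hu => norm_indicator_comp_natFloor_le hg hfg hθ ?_ hj hjb
    exact (uIoc_of_le hb.le ▸ hu).1
  · filter_upwards [volume.ae_ne a] with u hua hu
    rw [uIoc_of_le hb.le] at hu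
    exact tendsto_indicator_comp_natFloor hu.1.le hua
      (fun hlt => hf.continuousAt (Ioo_mem_nhds hu.1 (hlt.trans hab))) hh hm θ

end RiemannSums

section LogSinIntegral

/-- The primitive of `log ∘ sin` vanishing at `0`, a Lobachevsky-type function. The limits of the
normalized logarithms of products of sines are values of this function. -/
noncomputable def logSinIntegral (x : ℝ) : ℝ := ∫ y in (0 : ℝ)..x, Real.log (Real.sin y)

lemma integral_log_sin (a b : ℝ) :
    ∫ x in a..b, Real.log (Real.sin x) = logSinIntegral b - logSinIntegral a :=
  (intervalIntegral.integral_interval_sub_left intervalIntegrable_log_sin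
    intervalIntegrable_log_sin).symm

lemma intervalIntegrable_log_sin_add (α a b : ℝ) :
    IntervalIntegrable (fun x => Real.log (Real.sin (α + x))) volume a b := by
  simpa using (intervalIntegrable_log_sin (a := α + a) (b := α + b)).comp_add_left α

lemma intervalIntegrable_log_sin_sub (α a b : ℝ) :
    IntervalIntegrable (fun x => Real.log (Real.sin (α - x))) volume a b := by
  simpa using (intervalIntegrable_log_sin (a := α - a) (b := α - b)).comp_sub_left α

lemma ae_sin_ne_zero : ∀ᵐ x : ℝ, Real.sin x ≠ 0 := by
  have hcount : {x : ℝ | Real.sin x = 0}.Countable :=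
    (countable_range fun n : ℤ => (n : ℝ) * π).mono fun _ => Real.sin_eq_zero_iff.1
  exact hcount.ae_notMem volume

lemma ae_sin_add_ne_zero (α : ℝ) : ∀ᵐ x : ℝ, Real.sin (α + x) ≠ 0 :=
  (measurePreserving_add_left volume α).quasiMeasurePreserving.ae ae_sin_ne_zero

lemma ae_sin_sub_ne_zero (α : ℝ) : ∀ᵐ x : ℝ, Real.sin (α - x) ≠ 0 :=
  (quasiMeasurePreserving_sub_left_of_right_invariant volume α).ae ae_sin_ne_zero

lemma integral_log_sin_add_div_sin_sub (α c : ℝ) :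
    ∫ x in (0 : ℝ)..c, Real.log (Real.sin (α + x) / Real.sin (α - x)) =
      logSinIntegral (α + c) + logSinIntegral (α - c) - 2 * logSinIntegral α := by
  calc ∫ x in (0 : ℝ)..c, Real.log (Real.sin (α + x) / Real.sin (α - x))
      = ∫ x in (0 : ℝ)..c, (Real.log (Real.sin (α + x)) - Real.log (Real.sin (α - x))) := by
        refine intervalIntegral.integral_congr_ae ?_
        filter_upwards [ae_sin_add_ne_zero α, ae_sin_sub_ne_zero α] with x hadd hsub _
        exact Real.log_div hadd hsub
    _ = _ := by
        rw [intervalIntegral.integral_sub (intervalIntegrable_log_sin_add α 0 c)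
            (intervalIntegrable_log_sin_sub α 0 c),
          intervalIntegral.integral_comp_add_left fun x => Real.log (Real.sin x),
          intervalIntegral.integral_comp_sub_left fun x => Real.log (Real.sin x),
          integral_log_sin, integral_log_sin, add_zero, sub_zero]
        ring

lemma logSinIntegral_pi_div_two : logSinIntegral (π / 2) = -Real.log 2 * π / 2 :=
  integral_log_sin_zero_pi_div_two

lemma logSinIntegral_two_mul (a : ℝ) :
    logSinIntegral (2 * a) =
      (2 * a - π) * Real.log 2 + 2 * logSinIntegral a - 2 * logSinIntegral (π / 2 - a) := by
  have hdouble : ∀ᵐ x : ℝ, x ∈ uIoc 0 a → Real.log (Real.sin (2 * x)) =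
      Real.log 2 + Real.log (Real.sin x) + Real.log (Real.sin (π / 2 - x)) := by
    filter_upwards [ae_sin_ne_zero, ae_sin_sub_ne_zero (π / 2)] with x hx hx' _
    rw [Real.sin_two_mul, ← Real.sin_pi_div_two_sub, Real.log_mul (by positivity) hx',
      Real.log_mul two_ne_zero hx]
  calc logSinIntegral (2 * a) = 2 * ∫ x in (0 : ℝ)..a, Real.log (Real.sin (2 * x)) := by
        rw [intervalIntegral.mul_integral_comp_mul_left (f := fun x => Real.log (Real.sin x)),
          mul_zero, logSinIntegral]
    _ = 2 * (a * Real.log 2 + logSinIntegral a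
          + (logSinIntegral (π / 2) - logSinIntegral (π / 2 - a))) := by
        have hint : IntervalIntegrable (fun x => Real.log (Real.sin x)) volume 0 a :=
          intervalIntegrable_log_sin
        rw [intervalIntegral.integral_congr_ae hdouble, intervalIntegral.integral_add
            (intervalIntegrable_const.add hint) (intervalIntegrable_log_sin_sub _ 0 a),
          intervalIntegral.integral_add intervalIntegrable_const hint,
          intervalIntegral.integral_comp_sub_left fun x => Real.log (Real.sin x),
          intervalIntegral.integral_const, integral_log_sin (π / 2 - a), sub_zero, sub_zero,
          smul_eq_mul]
        rfl
    _ = _ := by rw [logSinIntegral_pi_div_two]; ring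

lemma seven_mul_logSinIntegral_pi_div_three :
    7 * logSinIntegral (π / 3) = 2 * logSinIntegral (2 * π / 3) + 6 * logSinIntegral (π / 6) := by
  have hsixth := logSinIntegral_two_mul (π / 6)
  have hthird := logSinIntegral_two_mul (π / 3)
  rw [show 2 * (π / 6) = π / 3 by ring, show π / 2 - π / 6 = π / 3 by ring] at hsixth
  rw [show 2 * (π / 3) = 2 * π / 3 by ring, show π / 2 - π / 3 = π / 6 by ring] at hthird
  linarith

lemma rateI_eq_logSinIntegral (s v : ℝ) :
    rateI s v = -(3 / π) *
      (2 * logSinIntegral (π * s / 3) + 2 * logSinIntegral (π * (2 - s) / 3)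
        + 3 * logSinIntegral (π / 3) - 2 * logSinIntegral (2 * π / 3)
        - logSinIntegral (π * (s + v) / 6) - logSinIntegral (π * (2 - s - v) / 6)
        - 2 * logSinIntegral (π * (s - v) / 6) - 2 * logSinIntegral (π * (2 - s + v) / 6)) := by
  have hsin (c : ℝ) :
      ∫ φ in (0 : ℝ)..c, Real.log (Real.sin (π * (φ + 1 / 6)) / Real.sin (π * (1 / 6 - φ))) =
        π⁻¹ * (logSinIntegral (π / 6 + π * c) + logSinIntegral (π / 6 - π * c)
          - 2 * logSinIntegral (π / 6)) := by
    rw [← integral_log_sin_add_div_sin_sub, ← mul_zero π,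
      ← intervalIntegral.mul_integral_comp_mul_left, inv_mul_cancel_left₀ Real.pi_ne_zero, mul_zero]
    ring_nf
  have hcos (c : ℝ) :
      ∫ φ in (0 : ℝ)..c, Real.log (Real.cos (π * (φ + 1 / 6)) / Real.cos (π * (1 / 6 - φ))) =
        -(π⁻¹ * (logSinIntegral (π / 3 + π * c) + logSinIntegral (π / 3 - π * c)
          - 2 * logSinIntegral (π / 3))) := by
    rw [← integral_log_sin_add_div_sin_sub, ← mul_zero π,
      ← intervalIntegral.mul_integral_comp_mul_left, inv_mul_cancel_left₀ Real.pi_ne_zero,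
      mul_zero, ← intervalIntegral.integral_neg]
    simp only [← Real.log_inv, inv_div, ← Real.sin_pi_div_two_sub]
    ring_nf
  rw [rateI, hsin, hsin, hcos,
    show π / 6 + π * ((1 - s - v) / 6) = π * (2 - s - v) / 6 by ring,
    show π / 6 - π * ((1 - s - v) / 6) = π * (s + v) / 6 by ring,
    show π / 6 + π * ((1 - s + v) / 6) = π * (2 - s + v) / 6 by ring,
    show π / 6 - π * ((1 - s + v) / 6) = π * (s - v) / 6 by ring,
    show π / 3 + π * ((1 - s) / 3) = π * (2 - s) / 3 by ring,
    show π / 3 - π * ((1 - s) / 3) = π * s / 3 by ring]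
  linear_combination (3 * π⁻¹) * seven_mul_logSinIntegral_pi_div_three

lemma sin_div_mul_le_sin {b x : ℝ} (hb : b ≤ π) (hx : x ∈ Ioo 0 b) :
    Real.sin b / b * x ≤ Real.sin x := by
  have hb0 : 0 < b := hx.1.trans hx.2
  have hxb : x / b ≤ 1 := (div_le_one hb0).2 hx.2.le
  have hconc := strictConcaveOn_sin_Icc.concaveOn.2 (left_mem_Icc.2 Real.pi_pos.le)
    (show b ∈ Icc 0 π from ⟨hb0.le, hb⟩) (sub_nonneg.2 hxb) (div_nonneg hx.1.le hb0.le)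
    (sub_add_cancel 1 (x / b))
  simp only [smul_eq_mul, mul_zero, zero_add, Real.sin_zero, div_mul_cancel₀ x hb0.ne'] at hconc
  rwa [div_mul_eq_mul_div, mul_comm, mul_div_right_comm]

lemma abs_log_sin_le {b x : ℝ} (hb : b < π) (hx : x ∈ Ioo 0 b) :
    |Real.log (Real.sin x)| ≤ -Real.log (Real.sin b / b) - Real.log x := by
  have hb0 : 0 < b := hx.1.trans hx.2
  have hslope : 0 < Real.sin b / b := div_pos (Real.sin_pos_of_pos_of_lt_pi hb0 hb) hb0
  have hlog := Real.log_le_log (mul_pos hslope hx.1) (sin_div_mul_le_sin hb.le hx)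
  rw [Real.log_mul hslope.ne' hx.1.ne'] at hlog
  rw [abs_of_nonpos (Real.log_nonpos (Real.sin_nonneg_of_nonneg_of_le_pi hx.1.le
    (hx.2.trans hb).le) (Real.sin_le_one x))]
  linarith

theorem tendsto_mul_sum_log_sin {ι : Type*} {l : Filter ι} [l.NeBot] [l.IsCountablyGenerated]
    {a θ : ℝ} (hθ : θ ∈ Ioc 0 1) {h : ι → ℝ} (hh : Tendsto h l (𝓝[>] 0)) {m : ι → ℕ}
    (hm : Tendsto (fun j => m j * h j) l (𝓝 a)) (ha : a < π) :
    Tendsto (fun j => h j * ∑ n ∈ Finset.range (m j), Real.log (Real.sin ((n + θ) * h j))) l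
      (𝓝 (logSinIntegral a)) := by
  obtain ⟨b, hab, hbπ⟩ := exists_between ha
  refine tendsto_smul_sum_integral_of_norm_le_antitone (f := fun x => Real.log (Real.sin x))
    (b := b) ?_ ?_ (fun x hx => abs_log_sin_le hbπ hx)
    (intervalIntegrable_const.sub intervalIntegral.intervalIntegrable_log') hθ hh hm hab
  · exact Real.continuous_sin.continuousOn.log fun x hx =>
      (Real.sin_pos_of_pos_of_lt_pi hx.1 (hx.2.trans hbπ)).ne'
  · exact fun x hx y _ hxy => sub_le_sub_left (Real.log_le_log hx.1 hxy) _

end LogSinIntegral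

section LogRate

variable {ι : Type*} {l : Filter ι} {h f g : ι → ℝ} {p q : ℝ}

/-- `f` has logarithmic rate `p` at speed `1 / h` along `l`: `h * log f` tends to `p`. Eventual
non-vanishing is included because `Real.log 0 = 0`; it makes the rate of a product the sum of the
rates. -/
structure HasLogRate (l : Filter ι) (h f : ι → ℝ) (p : ℝ) : Prop where
  eventually_ne_zero : ∀ᶠ j in l, f j ≠ 0
  tendsto : Tendsto (fun j => h j * Real.log (f j)) l (𝓝 p)

namespace HasLogRate

lemma congr' (hf : HasLogRate l h f p) (hfg : f =ᶠ[l] g) : HasLogRate l h g p where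
  eventually_ne_zero := by
    filter_upwards [hf.eventually_ne_zero, hfg] with j hj hfgj using hfgj ▸ hj
  tendsto := hf.tendsto.congr' (hfg.mono fun j hj => by rw [hj])

lemma mul (hf : HasLogRate l h f p) (hg : HasLogRate l h g q) :
    HasLogRate l h (fun j => f j * g j) (p + q) where
  eventually_ne_zero := by
    filter_upwards [hf.eventually_ne_zero, hg.eventually_ne_zero] with j hj hj'
      using mul_ne_zero hj hj'
  tendsto := by
    refine (hf.tendsto.add hg.tendsto).congr' ?_
    filter_upwards [hf.eventually_ne_zero, hg.eventually_ne_zero] with j hj hj'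
    rw [Real.log_mul hj hj', mul_add]

lemma inv (hf : HasLogRate l h f p) : HasLogRate l h (fun j => (f j)⁻¹) (-p) where
  eventually_ne_zero := hf.eventually_ne_zero.mono fun _ => inv_ne_zero
  tendsto := by simpa only [Real.log_inv, mul_neg] using hf.tendsto.neg

lemma div (hf : HasLogRate l h f p) (hg : HasLogRate l h g q) :
    HasLogRate l h (fun j => f j / g j) (p - q) := by
  simpa only [div_eq_mul_inv, sub_eq_add_neg] using hf.mul hg.inv

lemma pow (hf : HasLogRate l h f p) (n : ℕ) :
    HasLogRate l h (fun j => f j ^ n) (n * p) where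
  eventually_ne_zero := hf.eventually_ne_zero.mono fun _ => pow_ne_zero n
  tendsto := by
    simpa only [Real.log_pow, mul_left_comm _ (n : ℝ)] using hf.tendsto.const_mul (n : ℝ)

end HasLogRate

end LogRate

section SinProd

/-- The product of the values of `sin` at the first `m` nodes of the grid of step `h` shifted by
`θ * h`. The value `θ = 1` gives the sine products of `Ptilde`; after a quarter-period shift and
telescoping, its cosine products are quotients of products with `θ = 1 / 2`. -/
noncomputable def sinProd (h θ : ℝ) (m : ℕ) : ℝ :=
  ∏ n ∈ Finset.range m, Real.sin ((n + θ) * h)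

lemma sin_node_pos {h θ : ℝ} (hh : 0 < h) (hθ : θ ∈ Ioc 0 1) {m n : ℕ} (hm : m * h < π)
    (hn : n < m) : 0 < Real.sin ((n + θ) * h) := by
  have hnm : (n : ℝ) + 1 ≤ m := mod_cast hn
  have hpos : 0 < n + θ := add_pos_of_nonneg_of_pos n.cast_nonneg hθ.1
  refine Real.sin_pos_of_pos_of_lt_pi (by positivity) (lt_of_le_of_lt ?_ hm)
  gcongr
  linarith [hθ.2]

lemma sinProd_pos {h θ : ℝ} (hh : 0 < h) (hθ : θ ∈ Ioc 0 1) {m : ℕ} (hm : m * h < π) :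
    0 < sinProd h θ m :=
  Finset.prod_pos fun _ hn => sin_node_pos hh hθ hm (Finset.mem_range.1 hn)

lemma hasLogRate_sinProd {ι : Type*} {l : Filter ι} [l.NeBot] [l.IsCountablyGenerated]
    {a θ : ℝ} (hθ : θ ∈ Ioc 0 1) {h : ι → ℝ} (hh : Tendsto h l (𝓝[>] 0)) {m : ι → ℕ}
    (hm : Tendsto (fun j => m j * h j) l (𝓝 a)) (ha : a < π) :
    HasLogRate l h (fun j => sinProd (h j) θ (m j)) (logSinIntegral a) := by
  have hpos : ∀ᶠ j in l, 0 < h j := hh.eventually self_mem_nhdsWithin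
  have hlt : ∀ᶠ j in l, m j * h j < π := hm.eventually_lt_const ha
  refine ⟨?_, (tendsto_mul_sum_log_sin hθ hh hm ha).congr' ?_⟩
  · filter_upwards [hpos, hlt] with j hj hjπ using (sinProd_pos hj hθ hjπ).ne'
  · filter_upwards [hpos, hlt] with j hj hjπ
    rw [sinProd, Real.log_prod fun n hn => (sin_node_pos hj hθ hjπ (Finset.mem_range.1 hn)).ne']

lemma prod_Icc_one_intCast {M : Type*} [CommMonoid M] (f : ℤ → M) (m : ℕ) :
    ∏ n ∈ Finset.Icc (1 : ℤ) m, f n = ∏ i ∈ Finset.range m, f (i + 1) := by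
  simp [Int.Icc_eq_finset_map, add_comm]

lemma prod_Icc_sin_eq_sinProd (h : ℝ) (m : ℕ) :
    ∏ n ∈ Finset.Icc (1 : ℤ) m, Real.sin (n * h) = sinProd h 1 m := by
  simp [prod_Icc_one_intCast, sinProd]

lemma prod_Icc_sin_reflect_mul_sinProd (h θ : ℝ) (a b : ℕ) :
    (∏ n ∈ Finset.Icc (1 : ℤ) a, Real.sin ((a + b - n + θ) * h)) * sinProd h θ b =
      sinProd h θ (b + a) := by
  rw [sinProd, sinProd, Finset.prod_range_add, mul_comm, prod_Icc_one_intCast,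
    ← Finset.prod_range_reflect fun i => Real.sin (((b + i : ℕ) + θ) * h)]
  congr 1
  refine Finset.prod_congr rfl fun i hi => ?_
  have hia : i + 1 ≤ a := Finset.mem_range.1 hi
  rw [Nat.sub_sub, add_comm 1 i]
  push_cast [hia]
  ring_nf

end SinProd

section ExcursionMeasure

lemma mem_LambdaSet_iff {T : ℕ} {t x : ℤ} :
    (t, x) ∈ LambdaSet T ↔ ∃ a b : ℕ, a ≤ T ∧ b ≤ T ∧ t = a + b ∧ x = a - b := by
  constructor
  · rintro ⟨⟨k, hk⟩, hbounds⟩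
    simp only at hk hbounds
    exact ⟨k.toNat, (k - x).toNat, by omega, by omega, by omega, by omega⟩
  · rintro ⟨a, b, ha, hb, rfl, rfl⟩
    refine ⟨⟨a, by ring⟩, ?_⟩
    simp only
    omega

variable {T a b : ℕ}

lemma natCast_mul_pi_div_lt_pi (hT : 0 < T) {m : ℕ} (hm : m ≤ 2 * T) :
    m * (π / (3 * T)) < π := by
  have hm' : (m : ℝ) ≤ 2 * T := mod_cast hm
  calc m * (π / (3 * T)) ≤ 2 * T * (π / (3 * T)) := by gcongr
    _ = 2 / 3 * π := by field_simp
    _ < π := by linarith [Real.pi_pos]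

lemma prod_Icc_cos_eq_sinProd_div (hT : 0 < T) (a : ℕ) (hb : b ≤ 2 * T) {τ : ℝ}
    (hτ : τ = a + b) :
    ∏ n ∈ Finset.Icc (1 : ℤ) a, Real.cos ((2 * n + 3 * T - 2 * τ - 1) * π / (6 * T)) =
      sinProd (π / (3 * T)) (1 / 2) (a + b) / sinProd (π / (3 * T)) (1 / 2) b := by
  have hpos : 0 < sinProd (π / (3 * T)) (1 / 2) b :=
    sinProd_pos (by positivity) (by norm_num) (natCast_mul_pi_div_lt_pi hT hb)
  rw [eq_div_iff hpos.ne', add_comm a b, ← prod_Icc_sin_reflect_mul_sinProd, hτ]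
  congr 1
  refine Finset.prod_congr rfl fun n _ => ?_
  rw [← Real.sin_pi_div_two_sub]
  congr 1
  field_simp
  ring

lemma ctilde2_eq (hT : 0 < T) {h : ℝ} (hh : h = π / (3 * T)) {t u : ℕ} (htu : t + u = 2 * T) :
    ctilde2 T t =
      sinProd h 1 t * sinProd h 1 u * (sinProd h 1 T ^ 2 * sinProd h (1 / 2) T) /
        (sinProd h 1 (2 * T) * sinProd h (1 / 2) (2 * T)) := by
  have hcos := prod_Icc_cos_eq_sinProd_div hT T (b := T) (τ := 2 * T) (by omega) (by ring)
  have hcast : 2 * (T : ℤ) = (2 * T : ℕ) := by push_cast; rfl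
  have hu : ((2 * T : ℕ) : ℤ) - t = u := by omega
  have harg (n : ℤ) : (2 * n - T - 1 : ℝ) = 2 * n + 3 * T - 2 * (2 * T) - 1 := by ring
  rw [← hh, ← two_mul] at hcos
  simp only [ctilde2, hcast, hu, harg, Finset.prod_div_distrib, Finset.prod_pow,
    mul_div_assoc _ π (3 * (T : ℝ)), ← hh, prod_Icc_sin_eq_sinProd, hcos, div_div_eq_mul_div]
  ring

lemma Ptilde_eq (hT : 0 < T) {h : ℝ} (hh : h = π / (3 * T)) (ha : a ≤ T) (hb : b ≤ T) :
    Ptilde T (a + b) (a - b) =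
      sinProd h 1 (a + b) * sinProd h 1 (T - a + (T - b)) *
          (sinProd h 1 T ^ 2 * sinProd h (1 / 2) T) *
          (sinProd h (1 / 2) (a + b) * sinProd h (1 / 2) (T - a + (T - b))) /
        (sinProd h 1 (2 * T) * sinProd h (1 / 2) (2 * T) *
          (sinProd h 1 a * sinProd h 1 (T - a)) *
          (sinProd h 1 b * sinProd h (1 / 2) b *
            (sinProd h 1 (T - b) * sinProd h (1 / 2) (T - b)))) := by
  have hcos₁ := prod_Icc_cos_eq_sinProd_div hT a (b := b) (τ := a + b) (by omega) rfl
  have hcos₂ := prod_Icc_cos_eq_sinProd_div hT (T - a) (b := T - b) (τ := 2 * T - (a + b))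
    (by omega) (by push_cast [ha, hb]; ring)
  have hc := ctilde2_eq hT hh (t := a + b) (u := T - a + (T - b)) (by omega)
  have harg (n : ℤ) :
      (2 * n + 2 * (a + b) - T - 1 : ℝ) = 2 * n + 3 * T - 2 * (2 * T - (a + b)) - 1 := by ring
  rw [← hh] at hcos₁ hcos₂
  rw [Nat.cast_add] at hc
  rw [Ptilde, if_pos (mem_LambdaSet_iff.2 ⟨a, b, ha, hb, rfl, rfl⟩), hc,
    show ((a : ℤ) + b + (a - b)) / 2 = a by omega,
    show ((a : ℤ) + b - (a - b)) / 2 = b by omega,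
    show (2 * T - ((a : ℤ) + b) - (a - b)) / 2 = (T - a : ℕ) by omega,
    show (2 * T - ((a : ℤ) + b) + (a - b)) / 2 = (T - b : ℕ) by omega]
  simp only [Int.cast_add, Int.cast_natCast, harg, Finset.prod_div_distrib, Finset.prod_const_one,
    mul_div_assoc _ π (3 * (T : ℝ)), ← hh, prod_Icc_sin_eq_sinProd, hcos₁, hcos₂]
  ring

variable {ι : Type*} {l : Filter ι} {T a b : ι → ℕ} {α β θ : ℝ}

lemma tendsto_pi_div_three_mul (hT : Tendsto (fun j => (T j : ℝ)) l atTop) :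
    Tendsto (fun j => π / (3 * T j)) l (𝓝[>] 0) := by
  refine tendsto_nhdsWithin_iff.2 ⟨(hT.const_mul_atTop three_pos).const_div_atTop π, ?_⟩
  filter_upwards [hT.eventually_gt_atTop 0] with j hj using div_pos Real.pi_pos (by positivity)

lemma tendsto_natCast_mul_pi_div (hT : Tendsto (fun j => (T j : ℝ)) l atTop) :
    Tendsto (fun j => T j * (π / (3 * T j))) l (𝓝 (π / 3)) := by
  refine tendsto_const_nhds.congr' ?_
  filter_upwards [hT.eventually_gt_atTop 0] with j hj
  field_simp

variable [l.NeBot] [l.IsCountablyGenerated]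

lemma hasLogRate_sinProd_pi_div (hθ : θ ∈ Ioc 0 1) (hT : Tendsto (fun j => (T j : ℝ)) l atTop)
    {m : ι → ℕ} (hm : ∀ j, m j ≤ 2 * T j)
    (hα : Tendsto (fun j => m j * (π / (3 * T j))) l (𝓝 α)) :
    HasLogRate l (fun j => π / (3 * T j)) (fun j => sinProd (π / (3 * T j)) θ (m j))
      (logSinIntegral α) := by
  refine hasLogRate_sinProd hθ (tendsto_pi_div_three_mul hT) hα ?_
  have hle : α ≤ 2 * (π / 3) := by
    refine le_of_tendsto_of_tendsto' hα ((tendsto_natCast_mul_pi_div hT).const_mul 2) fun j => ?_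
    have hmj : (m j : ℝ) ≤ 2 * T j := mod_cast hm j
    rw [← mul_assoc]
    gcongr
  linarith [Real.pi_pos]

theorem hasLogRate_Ptilde (hT : Tendsto (fun j => (T j : ℝ)) l atTop) (ha : ∀ j, a j ≤ T j)
    (hb : ∀ j, b j ≤ T j) (hα : Tendsto (fun j => a j * (π / (3 * T j))) l (𝓝 α))
    (hβ : Tendsto (fun j => b j * (π / (3 * T j))) l (𝓝 β)) :
    HasLogRate l (fun j => π / (3 * T j)) (fun j => Ptilde (T j) (a j + b j) (a j - b j))
      (2 * logSinIntegral (α + β) + 2 * logSinIntegral (2 * π / 3 - (α + β))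
        + 3 * logSinIntegral (π / 3) - 2 * logSinIntegral (2 * π / 3)
        - logSinIntegral α - logSinIntegral (π / 3 - α)
        - 2 * logSinIntegral β - 2 * logSinIntegral (π / 3 - β)) := by
  have hthird := tendsto_natCast_mul_pi_div hT
  have hadd {m n : ι → ℕ} {γ δ : ℝ} (hγ : Tendsto (fun j => m j * (π / (3 * T j))) l (𝓝 γ))
      (hδ : Tendsto (fun j => n j * (π / (3 * T j))) l (𝓝 δ)) :
      Tendsto (fun j => (m j + n j : ℕ) * (π / (3 * T j))) l (𝓝 (γ + δ)) := by
    simpa only [Nat.cast_add, add_mul] using hγ.add hδ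
  have hcompl {m : ι → ℕ} {γ : ℝ} (hm : ∀ j, m j ≤ T j)
      (hγ : Tendsto (fun j => m j * (π / (3 * T j))) l (𝓝 γ)) :
      Tendsto (fun j => (T j - m j : ℕ) * (π / (3 * T j))) l (𝓝 (π / 3 - γ)) := by
    simpa only [Nat.cast_sub (hm _), sub_mul] using hthird.sub hγ
  have rate {m : ι → ℕ} {γ : ℝ} (hm : ∀ j, m j ≤ 2 * T j)
      (hγ : Tendsto (fun j => m j * (π / (3 * T j))) l (𝓝 γ)) :=
    And.intro (hasLogRate_sinProd_pi_div (θ := 1) (by norm_num) hT hm hγ)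
      (hasLogRate_sinProd_pi_div (θ := 1 / 2) (by norm_num) hT hm hγ)
  obtain ⟨sinT, cosT⟩ := rate (fun j => by omega) hthird
  obtain ⟨sin2T, cos2T⟩ := rate (fun j => le_rfl) (m := fun j => 2 * T j)
    (by simpa only [two_mul] using hadd hthird hthird)
  obtain ⟨sina, -⟩ := rate (fun j => by linarith [ha j]) hα
  obtain ⟨sinb, cosb⟩ := rate (fun j => by linarith [hb j]) hβ
  obtain ⟨sinc, -⟩ := rate (fun j => by omega) (hcompl ha hα)
  obtain ⟨sind, cosd⟩ := rate (fun j => by omega) (hcompl hb hβ)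
  obtain ⟨sinab, cosab⟩ := rate (fun j => by linarith [ha j, hb j]) (hadd hα hβ)
  obtain ⟨sincd, coscd⟩ := rate (fun j => by omega) (hadd (hcompl ha hα) (hcompl hb hβ))
  have hnum := ((sinab.mul sincd).mul ((sinT.pow 2).mul cosT)).mul (cosab.mul coscd)
  have hden := ((sin2T.mul cos2T).mul (sina.mul sinc)).mul ((sinb.mul cosb).mul (sind.mul cosd))
  convert (hnum.div hden).congr' ?_ using 1
  · push_cast
    ring_nf
  · filter_upwards [hT.eventually_gt_atTop 0] with j hj
    exact (Ptilde_eq (mod_cast hj) rfl (ha j) (hb j)).symm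

end ExcursionMeasure

end SimplifiedTrigLDP

/-- Lemma 7.1: the large deviation principle for the simplified trigonometric
excursion process, with rate function `I` given by the integral representation. -/
theorem simplified_trig_LDP (s v : ℝ) (hsv : (s, v) ∈ LambdaBar2)
    (T : ℕ → ℕ) (hTpos : ∀ j, 0 < T j)
    (hT : Tendsto (fun j => (T j : ℝ)) atTop atTop)
    (t x : ℕ → ℤ) (hmem : ∀ j, (t j, x j) ∈ LambdaSet (T j))
    (ht : Tendsto (fun j => (t j : ℝ) / (T j : ℝ)) atTop (nhds s))
    (hx : Tendsto (fun j => (x j : ℝ) / (T j : ℝ)) atTop (nhds v)) :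
    Tendsto (fun j => -(1 / (T j : ℝ)) * Real.log (Ptilde (T j) (t j) (x j)))
      atTop (nhds (rateI s v)) := by
  choose a b ha hb hta hxa using fun j => SimplifiedTrigLDP.mem_LambdaSet_iff.1 (hmem j)
  have hα : Tendsto (fun j => a j * (π / (3 * T j))) atTop (nhds (π * (s + v) / 6)) := by
    convert ((ht.add hx).const_mul π).div_const 6 using 2 with j
    rw [hta, hxa]
    push_cast
    ring
  have hβ : Tendsto (fun j => b j * (π / (3 * T j))) atTop (nhds (π * (s - v) / 6)) := by
    convert ((ht.sub hx).const_mul π).div_const 6 using 2 with j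
    rw [hta, hxa]
    push_cast
    ring
  have hrate := (SimplifiedTrigLDP.hasLogRate_Ptilde hT ha hb hα hβ).tendsto.const_mul (-(3 / π))
  rw [SimplifiedTrigLDP.rateI_eq_logSinIntegral]
  convert hrate using 2 with j
  · rw [hta, hxa]
    field_simp
  · ring_nf
end

section
/- Define ṽ(s) = (1/3)(s−1) − (16π²/729)(s−1)³. Then ṽ(1) = 0 and I(s, ṽ(s)) = O((s−1)⁸) as s → 1; that is, there exist C > 0 and δ > 0 such that |I(s, ṽ(s))| ≤ C|s−1|⁸ for all s with |s−1| < δ. Hence the scaled limit trajectory of the simplified trigonometric excursion process behaves near s = 1 as ṽ(s) = (1/3)(s−1) − (16π²/729)(s−1)³ + O((s−1)⁵). -/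
open scoped Real

/-- The approximate scaled limit trajectory `ṽ(s) = (s−1)/3 − (16π²/729)(s−1)³`. -/
noncomputable def vTilde (s : ℝ) : ℝ :=
  (1 / 3) * (s - 1) - (16 * π ^ 2 / 729) * (s - 1) ^ 3

/-!
The cosine integrand is minus the sine integrand with the angle `π/6` replaced by its complement
`π/3`, so `I` is a combination of values of the single family
`J_a(t) = ∫₀ᵗ log (sin (a + x) / sin (a - x)) dx`. Since
`J_a''(x) = sin 2a / (sin² a - sin² x)`, a geometric series in `sin² x` gives the expansion of `J_a`
to order six with error `O(t⁸)`. In `x = 1 - s` the arguments of the three terms are odd cubics.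
The slope `1/3` of `ṽ` makes the coefficient of `x²` in their sum vanish, and its cubic coefficient
makes those of `x⁴` and `x⁶` vanish simultaneously.
-/

open Real Filter Topology Asymptotics

lemma isBigO_pow_succ_of_hasDerivAt {E : Type*} [NormedAddCommGroup E] [NormedSpace ℝ E]
    {f f' : ℝ → E} {a : ℝ} {n : ℕ} (hfa : f a = 0) (hf : ∀ᶠ x in 𝓝 a, HasDerivAt f (f' x) x)
    (hf' : f' =O[𝓝 a] fun x => (x - a) ^ n) :
    f =O[𝓝 a] fun x => (x - a) ^ (n + 1) := by
  have hfderiv : fderiv ℝ f =O[𝓝 a] fun x => ‖x - a‖ ^ (n : ℝ) := by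
    refine IsBigO.trans (IsBigO.of_bound' ?_) (hf'.norm_right.congr_right fun x => ?_)
    · filter_upwards [hf] with x hx
      rw [← norm_deriv_eq_norm_fderiv, hx.deriv]
    · rw [norm_pow, rpow_natCast]
  have hnorm := isBigO_norm_rpow_add_one_of_fderiv_of_apply_eq_zero n.cast_nonneg
    (hf.mono fun x hx => hx.differentiableAt) hfderiv hfa
  refine IsBigO.of_norm_right (hnorm.congr_right fun x => ?_)
  rw [norm_pow, ← Nat.cast_add_one, rpow_natCast]

lemma eventually_hasDerivAt_integral {E : Type*} [NormedAddCommGroup E] [NormedSpace ℝ E]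
    [CompleteSpace E] {f : ℝ → E} {a : ℝ} (hf : ∀ᶠ x in 𝓝 a, ContinuousAt f x) :
    ∀ᶠ x in 𝓝 a, HasDerivAt (fun t => ∫ y in a..t, f y) (f x) x := by
  obtain ⟨ε, hε, hball⟩ := Metric.eventually_nhds_iff_ball.1 hf
  have hcont : ContinuousOn f (Metric.ball a ε) := fun y hy => (hball y hy).continuousWithinAt
  filter_upwards [Metric.ball_mem_nhds a hε] with x hx
  refine intervalIntegral.integral_hasDerivAt_right (hcont.mono ?_).intervalIntegrable
    (hcont.stronglyMeasurableAtFilter Metric.isOpen_ball x hx) (hball x hx)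
  exact (convex_ball a ε).ordConnected.uIcc_subset (Metric.mem_ball_self hε) hx

lemma isBigO_mul_of_continuousAt {X 𝕜 : Type*} [TopologicalSpace X] [NormedField 𝕜]
    {g f : X → 𝕜} {a : X} (hg : ContinuousAt g a) :
    (fun x => g x * f x) =O[𝓝 a] f := by
  simpa only [one_mul] using (hg.isBigO_one 𝕜).mul (isBigO_refl f (𝓝 a))

lemma inv_sub_sub_geom_isBigO {𝕜 : Type*} [NormedField 𝕜] {m : 𝕜} (hm : m ≠ 0) :
    (fun y : 𝕜 => (m - y)⁻¹ - (1 / m + y / m ^ 2 + y ^ 2 / m ^ 3)) =O[𝓝 0] fun y => y ^ 3 := by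
  have hcont : ContinuousAt (fun y : 𝕜 => (m - y)⁻¹ / m ^ 3) 0 :=
    ((continuousAt_const.sub continuousAt_id).inv₀ (by simpa using hm)).div_const _
  refine (isBigO_mul_of_continuousAt hcont).congr' ?_ EventuallyEq.rfl
  filter_upwards [eventually_ne_nhds hm.symm] with y hy
  have : m - y ≠ 0 := sub_ne_zero.2 hy.symm
  field_simp
  ring

lemma sin_isBigO : sin =O[𝓝 0] fun x => x :=
  IsBigO.of_bound' (Eventually.of_forall fun _ => abs_sin_le_abs)

lemma sin_sub_cubic_isBigO : (fun x => sin x - (x - x ^ 3 / 6)) =O[𝓝 0] fun x => x ^ 5 := by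
  refine IsBigO.of_bound (1 / 100) ?_
  filter_upwards [Metric.closedBall_mem_nhds (0 : ℝ) one_pos] with x hx
  have hbound := sin_bound (x := x) (by simpa using hx)
  rw [norm_eq_abs, norm_pow, norm_eq_abs]
  linarith

lemma sin_sq_sub_quartic_isBigO :
    (fun x => sin x ^ 2 - (x ^ 2 - x ^ 4 / 3)) =O[𝓝 0] fun x => x ^ 6 := by
  have hcubic : (fun x : ℝ => x - x ^ 3 / 6) =O[𝓝 0] fun x => x :=
    (isBigO_mul_of_continuousAt (g := fun x => 1 - x ^ 2 / 6) (by fun_prop)).congr_left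
      fun x => by ring
  have hprod := sin_sub_cubic_isBigO.mul (sin_isBigO.add hcubic)
  have hsix : (fun x : ℝ => 1 / 36 * x ^ 6) =O[𝓝 0] fun x => x ^ 6 :=
    isBigO_const_mul_self _ _ _
  exact ((hprod.congr_right fun x => by ring).add hsix).congr_left fun x => by ring

lemma sin_pow_four_sub_isBigO :
    (fun x => sin x ^ 4 - x ^ 4) =O[𝓝 0] fun x => x ^ 6 := by
  have hsub : (fun x => sin x - x) =O[𝓝 0] fun x => x ^ 3 := by
    have hfive : (fun x : ℝ => x ^ 5) =O[𝓝 0] fun x => x ^ 3 :=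
      (isBigO_mul_of_continuousAt (g := fun x => x ^ 2) (by fun_prop)).congr_left fun x => by ring
    have hthree : (fun x : ℝ => 1 / 6 * x ^ 3) =O[𝓝 0] fun x => x ^ 3 :=
      isBigO_const_mul_self _ _ _
    exact ((sin_sub_cubic_isBigO.trans hfive).sub hthree).congr_left fun x => by ring
  have hadd := sin_isBigO.add (isBigO_refl (fun x : ℝ => x) (𝓝 0))
  have hsq := (sin_isBigO.pow 2).add (isBigO_refl (fun x : ℝ => x ^ 2) (𝓝 0))
  exact ((hsub.mul hadd).mul hsq).congr (fun x => by ring) fun x => by ring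

lemma inv_sub_sin_sq_isBigO {m : ℝ} (hm : m ≠ 0) :
    (fun x => (m - sin x ^ 2)⁻¹ - (1 / m + 1 / m ^ 2 * x ^ 2 +
      (1 / m ^ 3 - 1 / (3 * m ^ 2)) * x ^ 4)) =O[𝓝 0] fun x => x ^ 6 := by
  have htendsto : Tendsto (fun x => sin x ^ 2) (𝓝 0) (𝓝 0) :=
    Continuous.tendsto' (by fun_prop) _ _ (by simp)
  have hgeom : (fun x => (m - sin x ^ 2)⁻¹ -
      (1 / m + sin x ^ 2 / m ^ 2 + (sin x ^ 2) ^ 2 / m ^ 3)) =O[𝓝 0] fun x => x ^ 6 :=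
    ((inv_sub_sub_geom_isBigO hm).comp_tendsto htendsto).trans <|
      (sin_isBigO.pow 6).congr_left fun x => by simp only [Function.comp_apply]; ring
  refine ((hgeom.add (sin_sq_sub_quartic_isBigO.const_mul_left (1 / m ^ 2))).add
    (sin_pow_four_sub_isBigO.const_mul_left (1 / m ^ 3))).congr_left fun x => ?_
  ring

/-- The even expansion `f t = α t² + β t⁴ + γ t⁶ + O(t⁸)` as `t → 0`. Every term of `I` is expanded
to this order, so that their cancellation can be read off the coefficients. -/
def HasEvenSexticExpansion (f : ℝ → ℝ) (α β γ : ℝ) : Prop :=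
  (fun t => f t - (α * t ^ 2 + β * t ^ 4 + γ * t ^ 6)) =O[𝓝 0] fun t => t ^ 8

namespace HasEvenSexticExpansion

variable {f g : ℝ → ℝ} {α β γ α' β' γ' : ℝ}

lemma add (hf : HasEvenSexticExpansion f α β γ) (hg : HasEvenSexticExpansion g α' β' γ') :
    HasEvenSexticExpansion (fun t => f t + g t) (α + α') (β + β') (γ + γ') :=
  (IsBigO.add hf hg).congr_left fun t => by ring

lemma const_mul (c : ℝ) (hf : HasEvenSexticExpansion f α β γ) :
    HasEvenSexticExpansion (fun t => c * f t) (c * α) (c * β) (c * γ) :=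
  (IsBigO.const_mul_left hf c).congr_left fun t => by ring

lemma comp_odd_cubic (hf : HasEvenSexticExpansion f α β γ) (p q : ℝ) :
    HasEvenSexticExpansion (fun x => f (p * x + q * x ^ 3)) (α * p ^ 2)
      (2 * α * p * q + β * p ^ 4) (α * q ^ 2 + 4 * β * p ^ 3 * q + γ * p ^ 6) := by
  have htendsto : Tendsto (fun x : ℝ => p * x + q * x ^ 3) (𝓝 0) (𝓝 0) :=
    Continuous.tendsto' (by fun_prop) _ _ (by simp)
  have hpow : (fun x : ℝ => (p * x + q * x ^ 3) ^ 8) =O[𝓝 0] fun x => x ^ 8 :=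
    (isBigO_mul_of_continuousAt (g := fun x => (p + q * x ^ 2) ^ 8) (by fun_prop)).congr_left
      fun x => by ring
  have hremainder : (fun x => f (p * x + q * x ^ 3) - (α * (p * x + q * x ^ 3) ^ 2 +
      β * (p * x + q * x ^ 3) ^ 4 + γ * (p * x + q * x ^ 3) ^ 6)) =O[𝓝 0] fun x => x ^ 8 :=
    (IsBigO.comp_tendsto hf htendsto).trans hpow
  have hhigher := isBigO_mul_of_continuousAt (a := 0) (f := fun x : ℝ => x ^ 8)
    (g := fun x => β * (6 * p ^ 2 * q ^ 2 + 4 * p * q ^ 3 * x ^ 2 + q ^ 4 * x ^ 4) +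
      γ * (6 * p ^ 5 * q + 15 * p ^ 4 * q ^ 2 * x ^ 2 + 20 * p ^ 3 * q ^ 3 * x ^ 4 +
        15 * p ^ 2 * q ^ 4 * x ^ 6 + 6 * p * q ^ 5 * x ^ 8 + q ^ 6 * x ^ 10)) (by fun_prop)
  exact (hremainder.add hhigher).congr_left fun x => by ring

lemma of_hasDerivAt_hasDerivAt {f' f'' : ℝ → ℝ} (hf_zero : f 0 = 0) (hf'_zero : f' 0 = 0)
    (hf : ∀ᶠ t in 𝓝 0, HasDerivAt f (f' t) t) (hf' : ∀ᶠ t in 𝓝 0, HasDerivAt f' (f'' t) t)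
    (hf'' : (fun t => f'' t - (α + β * t ^ 2 + γ * t ^ 4)) =O[𝓝 0] fun t => t ^ 6) :
    HasEvenSexticExpansion f (α / 2) (β / 12) (γ / 30) := by
  have hfirst : (fun t => f' t - (α * t + β / 3 * t ^ 3 + γ / 5 * t ^ 5)) =O[𝓝 0]
      fun t => t ^ 7 := by
    have hderiv : ∀ᶠ t in 𝓝 0, HasDerivAt (fun t => f' t - (α * t + β / 3 * t ^ 3 + γ / 5 * t ^ 5))
        (f'' t - (α + β * t ^ 2 + γ * t ^ 4)) t := by
      filter_upwards [hf'] with t ht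
      refine (ht.sub ((((hasDerivAt_id t).const_mul α).add ((hasDerivAt_pow 3 t).const_mul
        (β / 3))).add ((hasDerivAt_pow 5 t).const_mul (γ / 5)))).congr_deriv ?_
      push_cast
      ring
    simpa only [sub_zero] using isBigO_pow_succ_of_hasDerivAt (by simp [hf'_zero]) hderiv
      (by simpa only [sub_zero] using hf'')
  have hderiv : ∀ᶠ t in 𝓝 0, HasDerivAt
      (fun t => f t - (α / 2 * t ^ 2 + β / 12 * t ^ 4 + γ / 30 * t ^ 6))
      (f' t - (α * t + β / 3 * t ^ 3 + γ / 5 * t ^ 5)) t := by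
    filter_upwards [hf] with t ht
    refine (ht.sub ((((hasDerivAt_pow 2 t).const_mul (α / 2)).add ((hasDerivAt_pow 4 t).const_mul
      (β / 12))).add ((hasDerivAt_pow 6 t).const_mul (γ / 30)))).congr_deriv ?_
    push_cast
    ring
  simpa only [HasEvenSexticExpansion, sub_zero] using
    isBigO_pow_succ_of_hasDerivAt (by simp [hf_zero]) hderiv (by simpa only [sub_zero] using hfirst)

end HasEvenSexticExpansion

/-- The integrand of the rate function for a general angle `a`. -/
noncomputable def logSinRatio (a x : ℝ) : ℝ :=
  log (sin (a + x) / sin (a - x))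

/-- The primitive `J_a` of `logSinRatio a`. In terms of the Lobachevsky function it is the second
difference `2 Λ(a) - Λ(a + t) - Λ(a - t)`. -/
noncomputable def logSinRatioIntegral (a t : ℝ) : ℝ :=
  ∫ x in 0..t, logSinRatio a x

lemma sin_add_mul_sin_sub_eq (a x : ℝ) :
    sin (a + x) * sin (a - x) = sin a ^ 2 - sin x ^ 2 := by
  rw [sin_add, sin_sub]
  linear_combination sin a ^ 2 * cos_sq' x - sin x ^ 2 * cos_sq' a

lemma hasDerivAt_logSinRatio {a x : ℝ} (hadd : sin (a + x) ≠ 0) (hsub : sin (a - x) ≠ 0) :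
    HasDerivAt (logSinRatio a) (sin (2 * a) * (sin a ^ 2 - sin x ^ 2)⁻¹) x := by
  have hnum : HasDerivAt (fun y => sin (a + y)) (cos (a + x)) x := by
    simpa using ((hasDerivAt_id x).const_add a).sin
  have hden : HasDerivAt (fun y => sin (a - y)) (-cos (a - x)) x := by
    simpa using ((hasDerivAt_id x).const_sub a).sin
  have hsum : cos (a + x) * sin (a - x) + sin (a + x) * cos (a - x) = sin (2 * a) := by
    rw [show 2 * a = (a + x) + (a - x) by ring, sin_add (a + x)]
    ring
  refine ((hnum.div hden hsub).log (div_ne_zero hadd hsub)).congr_deriv ?_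
  rw [← sin_add_mul_sin_sub_eq, ← hsum, Pi.div_apply]
  field_simp
  ring

lemma eventually_hasDerivAt_logSinRatio {a : ℝ} (ha : sin a ≠ 0) :
    ∀ᶠ x in 𝓝 0, HasDerivAt (logSinRatio a) (sin (2 * a) * (sin a ^ 2 - sin x ^ 2)⁻¹) x := by
  have hadd : ∀ᶠ x in 𝓝 0, sin (a + x) ≠ 0 :=
    ContinuousAt.eventually_ne (by fun_prop) (by simpa using ha)
  have hsub : ∀ᶠ x in 𝓝 0, sin (a - x) ≠ 0 :=
    ContinuousAt.eventually_ne (by fun_prop) (by simpa using ha)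
  filter_upwards [hadd, hsub] with x using hasDerivAt_logSinRatio

lemma hasEvenSexticExpansion_logSinRatioIntegral {a : ℝ} (ha : sin a ≠ 0) :
    HasEvenSexticExpansion (logSinRatioIntegral a) (sin (2 * a) * (1 / sin a ^ 2) / 2)
      (sin (2 * a) * (1 / (sin a ^ 2) ^ 2) / 12)
      (sin (2 * a) * (1 / (sin a ^ 2) ^ 3 - 1 / (3 * (sin a ^ 2) ^ 2)) / 30) := by
  have hderiv := eventually_hasDerivAt_logSinRatio ha
  refine HasEvenSexticExpansion.of_hasDerivAt_hasDerivAt (by simp [logSinRatioIntegral])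
    (by simp [logSinRatio, ha])
    (eventually_hasDerivAt_integral (hderiv.mono fun x hx => hx.continuousAt)) hderiv ?_
  exact ((inv_sub_sin_sq_isBigO (pow_ne_zero 2 ha)).const_mul_left (sin (2 * a))).congr_left
    fun x => by ring

lemma hasEvenSexticExpansion_logSinRatioIntegral_pi_div_six :
    HasEvenSexticExpansion (logSinRatioIntegral (π / 6)) √3 (2 * √3 / 3) (44 * √3 / 45) := by
  have h := hasEvenSexticExpansion_logSinRatioIntegral (a := π / 6) (by simp)
  rw [show 2 * (π / 6) = π / 3 by ring, sin_pi_div_three, sin_pi_div_six] at h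
  convert h using 1 <;> ring

lemma hasEvenSexticExpansion_logSinRatioIntegral_pi_div_three :
    HasEvenSexticExpansion (logSinRatioIntegral (π / 3)) (√3 / 3) (2 * √3 / 27)
      (4 * √3 / 135) := by
  have h := hasEvenSexticExpansion_logSinRatioIntegral (a := π / 3) (by simp)
  rw [show 2 * (π / 3) = π - π / 3 by ring, sin_pi_sub, sq_sin_pi_div_three,
    sin_pi_div_three] at h
  convert h using 1 <;> ring

lemma integral_logSinRatio_pi_mul (a t : ℝ) :
    ∫ φ in 0..t, logSinRatio a (π * φ) = π⁻¹ * logSinRatioIntegral a (π * t) := by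
  rw [intervalIntegral.integral_comp_mul_left _ pi_ne_zero, mul_zero, smul_eq_mul,
    logSinRatioIntegral]

lemma log_cos_ratio_eq_neg_logSinRatio (a x : ℝ) :
    log (cos (a + x) / cos (a - x)) = -logSinRatio (π / 2 - a) x := by
  have hadd : cos (a + x) = sin (π / 2 - a - x) := by
    rw [← sin_pi_div_two_sub, sub_add_eq_sub_sub]
  have hsub : cos (a - x) = sin (π / 2 - a + x) := by
    rw [← sin_pi_div_two_sub, sub_sub_eq_add_sub, sub_add_eq_add_sub]
  rw [logSinRatio, ← log_inv, inv_div, hadd, hsub]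

lemma rateI_eq_logSinRatioIntegral (s v : ℝ) :
    rateI s v = 3 / π * logSinRatioIntegral (π / 6) (π * ((1 - s - v) / 6)) +
      6 / π * logSinRatioIntegral (π / 6) (π * ((1 - s + v) / 6)) +
      -6 / π * logSinRatioIntegral (π / 3) (π * ((1 - s) / 3)) := by
  have hadd (φ : ℝ) : π * (φ + 1 / 6) = π / 6 + π * φ := by ring
  have hsub (φ : ℝ) : π * (1 / 6 - φ) = π / 6 - π * φ := by ring
  have hsin (φ : ℝ) : log (sin (π * (φ + 1 / 6)) / sin (π * (1 / 6 - φ))) =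
      logSinRatio (π / 6) (π * φ) := by
    rw [hadd, hsub, logSinRatio]
  have hcos (φ : ℝ) : log (cos (π * (φ + 1 / 6)) / cos (π * (1 / 6 - φ))) =
      -logSinRatio (π / 3) (π * φ) := by
    rw [hadd, hsub, log_cos_ratio_eq_neg_logSinRatio, show π / 2 - π / 6 = π / 3 by ring]
  simp only [rateI, hsin, hcos, intervalIntegral.integral_neg, integral_logSinRatio_pi_mul]
  ring

lemma rateI_vTilde_one_sub (x : ℝ) :
    rateI (1 - x) (vTilde (1 - x)) =
      3 / π * logSinRatioIntegral (π / 6) (2 * π / 9 * x + -(8 * π ^ 3 / 2187) * x ^ 3) +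
      6 / π * logSinRatioIntegral (π / 6) (π / 9 * x + 8 * π ^ 3 / 2187 * x ^ 3) +
      -6 / π * logSinRatioIntegral (π / 3) (π / 3 * x + 0 * x ^ 3) := by
  rw [rateI_eq_logSinRatioIntegral, vTilde]
  congr 4 <;> ring

lemma hasEvenSexticExpansion_rateI_vTilde :
    HasEvenSexticExpansion (fun x => rateI (1 - x) (vTilde (1 - x))) 0 0 0 := by
  have h₁ := (hasEvenSexticExpansion_logSinRatioIntegral_pi_div_six.comp_odd_cubic
    (2 * π / 9) (-(8 * π ^ 3 / 2187))).const_mul (3 / π)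
  have h₂ := (hasEvenSexticExpansion_logSinRatioIntegral_pi_div_six.comp_odd_cubic
    (π / 9) (8 * π ^ 3 / 2187)).const_mul (6 / π)
  have h₃ := (hasEvenSexticExpansion_logSinRatioIntegral_pi_div_three.comp_odd_cubic
    (π / 3) 0).const_mul (-6 / π)
  convert (h₁.add h₂).add h₃ using 1
  · exact funext rateI_vTilde_one_sub
  all_goals ring

/-- Theorem 7.2: `ṽ(1) = 0` and `I(s, ṽ(s)) = O((s−1)⁸)` as `s → 1`;
hence the scaled limit trajectory behaves near `s = 1` as
`ṽ(s) = (s−1)/3 − (16π²/729)(s−1)³ + O((s−1)⁵)`. -/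
theorem trajectory_near_one :
    vTilde 1 = 0 ∧
    ∃ C : ℝ, 0 < C ∧ ∃ δ : ℝ, 0 < δ ∧ ∀ s : ℝ, |s - 1| < δ →
      |rateI s (vTilde s)| ≤ C * |s - 1| ^ 8 := by
  refine ⟨by simp [vTilde], ?_⟩
  have hO : (fun x => rateI (1 - x) (vTilde (1 - x))) =O[𝓝 0] fun x => x ^ 8 := by
    simpa [HasEvenSexticExpansion] using hasEvenSexticExpansion_rateI_vTilde
  obtain ⟨C, hC, hbound⟩ := hO.exists_pos
  obtain ⟨δ, hδ, hball⟩ := Metric.eventually_nhds_iff.1 hbound.bound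
  refine ⟨C, hC, δ, hδ, fun s hs => ?_⟩
  simpa [abs_sub_comm] using hball (y := 1 - s) (by simpa [abs_sub_comm] using hs)
end

section
/- Let ξ ∈ ℝ and let (T_j) be a sequence of positive integers tending to infinity and (x_j) integers with T_j + x_j even and x_j/√(T_j) → ξ as j → ∞. Then (√(T_j)/2) · P̃_{2T_j}(T_j, x_j) converges to f(ξ) = (3^{1/4}/2) · exp(−(√3 π/4) ξ²) as j → ∞. That is, at time t = T the fluctuation of the simplified trigonometric excursion process is of order √T with normally distributed coefficient of variance σ² = 2/(√3 π). -/
open scoped Real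
open Filter

/-!
At time `t = T` the cosines are sines at midpoints of the grid of mesh `π/(3T)`, so that
`P̃(T, a - b)` is a quotient of products of the form `∏_{k ≤ m} sin (kπ/n)` with `n = 3T` and
`n = 6T`. Such a product has a Stirling formula `√(2n sin θ) exp (n G(θ) / π)`, where `θ = mπ/n` and
`G(θ) = ∫₀^θ log sin`: the products for `m` and `n - m` combine to the exact value
`n sin θ / 2^(n-1)`, and the logarithm of their quotient is a trapezoidal sum of `log sin` over
`[θ, π - θ]`. The duplication formula of `G` at `π/6` cancels the terms linear in `T`, and what
remains is a symmetric second difference of `G` at `π/6`; the Gaussian coefficient comes from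
`G''(π/6) = cot (π/6) = √3`.
-/

open Asymptotics Finset MeasureTheory
open scoped Topology

/-! ### Second differences and trapezoidal sums -/

theorem isLittleO_second_difference {E : Type*} [NormedAddCommGroup E] [NormedSpace ℝ E]
    {f f' : ℝ → E} {f'' : E} {a : ℝ} (hf : ∀ᶠ y in 𝓝 a, HasDerivAt f (f' y) y)
    (hf' : HasDerivAt f' f'' a) :
    (fun d => f (a + d) + f (a - d) - (2 : ℝ) • f a - d ^ 2 • f'') =o[𝓝 0] fun d : ℝ => d ^ 2 := by
  obtain ⟨ε, hε, hball⟩ := Metric.eventually_nhds_iff_ball.1 hf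
  have hderiv : ∀ d ∈ Metric.ball (0 : ℝ) ε,
      HasDerivWithinAt (fun d => f (a + d) + f (a - d) - (2 : ℝ) • f a - d ^ 2 • f'')
        (f' (a + d) - f' (a - d) - (2 * d) • f'') (Metric.ball 0 ε) d := by
    intro d hd
    have hplus := (hball (a + d) (by simpa using hd)).comp_const_add a d
    have hminus := (hball (a - d) (by simpa using hd)).comp_const_sub a d
    have hsq : HasDerivAt (fun d : ℝ => d ^ 2) (2 * d) d := by simpa using hasDerivAt_pow 2 d
    exact ((((hplus.add hminus).sub_const _).sub (hsq.smul_const f'')).congr_deriv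
      (by rw [← sub_eq_add_neg])).hasDerivWithinAt
  have hplus : HasDerivAt (fun d => f' (a + d)) f'' 0 :=
    HasDerivAt.comp_const_add a 0 (by simpa using hf')
  have hminus : HasDerivAt (fun d => f' (a - d)) (-f'') 0 :=
    HasDerivAt.comp_const_sub a 0 (by simpa using hf')
  have hsmall : (fun d => f' (a + d) - f' (a - d) - (2 * d) • f'') =o[𝓝[Metric.ball 0 ε] 0]
      fun d : ℝ => (d - 0) ^ 1 := by
    refine ((hplus.sub hminus).isLittleO.congr (fun d => ?_) fun d => by simp).mono
      nhdsWithin_le_nhds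
    simp only [Pi.sub_apply, add_zero, sub_zero, sub_self, sub_neg_eq_add, ← two_smul ℝ f'',
      smul_smul, mul_comm]
  have := Convex.isLittleO_pow_succ_real (convex_ball (0 : ℝ) ε) (Metric.mem_ball_self hε)
    hderiv hsmall
  rw [Metric.isOpen_ball.nhdsWithin_eq (Metric.mem_ball_self hε)] at this
  simpa [two_smul] using this

theorem tendsto_second_difference_div {ι : Type*} {l : Filter ι} {f f' : ℝ → ℝ} {f'' a L : ℝ}
    {d h : ι → ℝ} (hf : ∀ᶠ y in 𝓝 a, HasDerivAt f (f' y) y) (hf' : HasDerivAt f' f'' a)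
    (hd : Tendsto d l (𝓝 0)) (hdh : Tendsto (fun j => d j ^ 2 / h j) l (𝓝 L)) :
    Tendsto (fun j => (f (a + d j) + f (a - d j) - 2 * f a) / h j) l (𝓝 (f'' * L)) := by
  have hratio := ((isLittleO_second_difference hf hf').comp_tendsto hd).tendsto_div_nhds_zero
  have hlim := (hratio.mul hdh).add (hdh.const_mul f'')
  rw [zero_mul, zero_add] at hlim
  refine hlim.congr fun j => ?_
  simp only [Function.comp_apply, smul_eq_mul]
  rcases eq_or_ne (d j) 0 with hdj | hdj
  · simp [hdj, two_mul]
  · field_simp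
    ring

theorem trapezoidal_error_le_of_hasDerivAt {f f' f'' : ℝ → ℝ} {a b ζ : ℝ} (hab : a < b)
    (hf : ∀ y ∈ Set.Icc a b, HasDerivAt f (f' y) y)
    (hf' : ∀ y ∈ Set.Icc a b, HasDerivAt f' (f'' y) y)
    (hζ : ∀ y ∈ Set.Icc a b, |f'' y| ≤ ζ) {N : ℕ} (hN : 0 < N) :
    |trapezoidal_error f N a b| ≤ (b - a) ^ 3 * ζ / (12 * N ^ 2) := by
  have hunique := uniqueDiffOn_Icc hab
  have hderiv : ∀ y ∈ Set.Icc a b, derivWithin f (Set.Icc a b) y = f' y := fun y hy =>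
    (hf y hy).hasDerivWithinAt.derivWithin (hunique y hy)
  have hderiv' : ∀ y ∈ Set.Icc a b,
      HasDerivWithinAt (derivWithin f (Set.Icc a b)) (f'' y) (Set.Icc a b) y := fun y hy =>
    (hf' y hy).hasDerivWithinAt.congr hderiv (hderiv y hy)
  rw [← abs_of_pos (sub_pos.2 hab)]
  refine trapezoidal_error_le ?_ ?_ ?_ hN <;> rw [Set.uIcc_of_le hab.le]
  · exact fun y hy => (hf y hy).differentiableAt.differentiableWithinAt
  · exact fun y hy => (hderiv' y hy).differentiableWithinAt
  · intro y
    rw [iteratedDerivWithin_succ, iteratedDerivWithin_one]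
    by_cases hy : y ∈ Set.Icc a b
    · rw [(hderiv' y hy).derivWithin (hunique y hy)]
      exact hζ y hy
    · rw [derivWithin_zero_of_notMem_closure (by rwa [isClosed_Icc.closure_eq]), abs_zero]
      exact (abs_nonneg _).trans (hζ a (Set.left_mem_Icc.2 hab.le))

theorem abs_mul_sum_sub_integral_le {f f' f'' : ℝ → ℝ} {a h ζ : ℝ} {N : ℕ} (hh : 0 < h)
    (hf : ∀ y ∈ Set.Icc a (a + N * h), HasDerivAt f (f' y) y)
    (hf' : ∀ y ∈ Set.Icc a (a + N * h), HasDerivAt f' (f'' y) y)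
    (hζ : ∀ y ∈ Set.Icc a (a + N * h), |f'' y| ≤ ζ) :
    |h * (∑ k ∈ range N, f (a + (k + 1) * h) + (f a - f (a + N * h)) / 2) -
        ∫ u in a..(a + N * h), f u| ≤ N * h ^ 3 * ζ / 12 := by
  rcases N with _ | N
  · simp
  have herror := trapezoidal_error_le_of_hasDerivAt (N := N + 1)
    (lt_add_of_pos_right a (by positivity)) hf hf' hζ N.succ_pos
  have hnode : ∀ k : ℕ, a + (k + 1) * (((N + 1 : ℕ) : ℝ) * h) / ((N + 1 : ℕ) : ℝ) =
      a + (k + 1) * h := fun k => by field_simp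
  simp only [trapezoidal_error, trapezoidal_integral, add_sub_cancel_left, Nat.add_sub_cancel,
    hnode] at herror
  rw [mul_div_cancel_left₀ h (by positivity)] at herror
  convert herror using 1
  · rw [sum_range_succ]
    push_cast
    ring_nf
  · field_simp

/-! ### The log-sine integral -/

/-- The log-sine integral `∫₀^θ log (sin u) du`, which is the rate function of products of sines
along an arithmetic progression. -/
noncomputable def logSinIntegral (θ : ℝ) : ℝ :=
  ∫ u in 0..θ, Real.log (Real.sin u)

theorem integral_log_sin (a b : ℝ) :
    ∫ u in a..b, Real.log (Real.sin u) = logSinIntegral b - logSinIntegral a :=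
  (intervalIntegral.integral_interval_sub_left intervalIntegrable_log_sin
    intervalIntegrable_log_sin).symm

theorem hasDerivAt_log_sin {θ : ℝ} (hθ : Real.sin θ ≠ 0) :
    HasDerivAt (fun u => Real.log (Real.sin u)) (Real.cot θ) θ := by
  rw [Real.cot_eq_cos_div_sin]
  exact (Real.hasDerivAt_sin θ).log hθ

theorem hasDerivAt_cot {θ : ℝ} (hθ : Real.sin θ ≠ 0) :
    HasDerivAt Real.cot (-(Real.sin θ ^ 2)⁻¹) θ := by
  have h := (Real.hasDerivAt_cos θ).div (Real.hasDerivAt_sin θ) hθ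
  rw [show Real.cot = Real.cos / Real.sin from funext Real.cot_eq_cos_div_sin]
  refine h.congr_deriv ?_
  field_simp
  linarith [Real.sin_sq_add_cos_sq θ]

theorem hasDerivAt_logSinIntegral {θ : ℝ} (hθ : Real.sin θ ≠ 0) :
    HasDerivAt logSinIntegral (Real.log (Real.sin θ)) θ :=
  intervalIntegral.integral_hasDerivAt_right intervalIntegrable_log_sin
    (Real.measurable_log.comp Real.measurable_sin).stronglyMeasurable.stronglyMeasurableAtFilter
    (hasDerivAt_log_sin hθ).continuousAt

theorem logSinIntegral_pi_sub (θ : ℝ) :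
    logSinIntegral (π - θ) = -π * Real.log 2 - logSinIntegral θ := by
  have hreflect : ∫ u in (π - θ)..π, Real.log (Real.sin u) = logSinIntegral θ := by
    have h := intervalIntegral.integral_comp_sub_left (a := 0) (b := θ)
      (fun u => Real.log (Real.sin u)) π
    simpa only [Real.sin_pi_sub, sub_zero, logSinIntegral] using h.symm
  have hpi : logSinIntegral π = -Real.log 2 * π := integral_log_sin_zero_pi
  rw [integral_log_sin, hpi] at hreflect
  linarith

theorem logSinIntegral_two_mul {θ : ℝ} (h0 : 0 ≤ θ) (h1 : θ ≤ π / 2) :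
    logSinIntegral (2 * θ) = (2 * θ - π) * Real.log 2 + 2 * logSinIntegral θ -
      2 * logSinIntegral (π / 2 - θ) := by
  have hcos : ∫ u in 0..θ, Real.log (Real.cos u) =
      logSinIntegral (π / 2) - logSinIntegral (π / 2 - θ) := by
    have h := intervalIntegral.integral_comp_sub_left (a := 0) (b := θ)
      (fun u => Real.log (Real.sin u)) (π / 2)
    simpa only [Real.sin_pi_div_two_sub, sub_zero, integral_log_sin] using h
  have hdouble : ∫ u in 0..θ, Real.log (Real.sin (2 * u)) =
      ∫ u in 0..θ, (Real.log 2 + Real.log (Real.sin u) + Real.log (Real.cos u)) := by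
    refine intervalIntegral.integral_congr_uIoo fun u hu => ?_
    rw [Set.uIoo_of_le h0] at hu
    have hsin := Real.sin_pos_of_pos_of_lt_pi hu.1 (by linarith [hu.2, Real.pi_pos])
    have hcos := Real.cos_pos_of_mem_Ioo (x := u) ⟨by linarith [hu.1], by linarith [hu.2]⟩
    rw [Real.sin_two_mul, Real.log_mul (by positivity) hcos.ne', Real.log_mul two_ne_zero hsin.ne']
  have hpi : logSinIntegral (π / 2) = -Real.log 2 * π / 2 := integral_log_sin_zero_pi_div_two
  have hint_sin : IntervalIntegrable (fun u => Real.log (Real.sin u)) volume 0 θ :=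
    intervalIntegrable_log_sin
  have hint_cos : IntervalIntegrable (fun u => Real.log (Real.cos u)) volume 0 θ :=
    intervalIntegrable_log_cos
  rw [intervalIntegral.integral_add (intervalIntegrable_const.add hint_sin) hint_cos,
    intervalIntegral.integral_add intervalIntegrable_const hint_sin, hcos, hpi,
    intervalIntegral.integral_comp_mul_left (fun u => Real.log (Real.sin u)) two_ne_zero,
    intervalIntegral.integral_const, mul_zero, ← logSinIntegral, ← logSinIntegral] at hdouble
  simp only [smul_eq_mul, sub_zero] at hdouble
  linarith

/-! ### Stirling's formula for products of sines -/

/-- The product `∏_{k=1}^m sin (kπ/n)` of the first `m` sines on the grid of mesh `π/n`. -/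
noncomputable def sineProd (n m : ℕ) : ℝ :=
  ∏ k ∈ range m, Real.sin ((k + 1) * π / n)

theorem sin_mul_pi_div_pos {x n : ℝ} (hx : 0 < x) (hxn : x < n) : 0 < Real.sin (x * π / n) := by
  have hn : 0 < n := hx.trans hxn
  refine Real.sin_pos_of_pos_of_lt_pi (by positivity) ?_
  rw [div_lt_iff₀ hn, mul_comm]
  gcongr

theorem sineProd_pos {n m : ℕ} (hmn : m < n) : 0 < sineProd n m :=
  prod_pos fun k hk => sin_mul_pi_div_pos (by positivity) <| by
    exact_mod_cast (Nat.succ_le_of_lt (mem_range.1 hk)).trans_lt hmn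

theorem sineProd_add (n m k : ℕ) :
    sineProd n (m + k) = sineProd n m * ∏ i ∈ range k, Real.sin ((m + (i + 1)) * π / n) := by
  simp only [sineProd, prod_range_add, Nat.cast_add, add_assoc]

theorem sineProd_succ_self (n : ℕ) : sineProd (n + 1) n = (n + 1) / 2 ^ n := by
  have hroot := (Complex.isPrimitiveRoot_exp (n + 1) n.succ_ne_zero).prod_one_sub_pow_eq_order
  have hfactor : ∀ k ∈ range n,
      ‖1 - Complex.exp (2 * π * Complex.I / ((n + 1 : ℕ) : ℂ)) ^ (k + 1)‖ =
        2 * Real.sin ((k + 1) * π / (n + 1 : ℕ)) := by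
    intro k hk
    have hpos : 0 < Real.sin ((k + 1) * π / (n + 1 : ℕ)) :=
      sin_mul_pi_div_pos (by positivity) (by exact_mod_cast Nat.succ_lt_succ (mem_range.1 hk))
    have hexp : Complex.exp (2 * π * Complex.I / ((n + 1 : ℕ) : ℂ)) ^ (k + 1) =
        Complex.exp (Complex.I * ((2 * ((k + 1) * π / (n + 1 : ℕ)) : ℝ) : ℂ)) := by
      rw [← Complex.exp_nat_mul]
      push_cast
      ring_nf
    rw [hexp, norm_sub_rev, Complex.norm_exp_I_mul_ofReal_sub_one,
      mul_div_cancel_left₀ _ two_ne_zero, Real.norm_of_nonneg (by positivity)]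
  have hnorm := congrArg norm hroot
  rw [norm_prod, prod_congr rfl hfactor, prod_mul_distrib, prod_const, card_range, ← sineProd,
    ← Nat.cast_add_one, Complex.norm_natCast] at hnorm
  rw [eq_div_iff (by positivity), mul_comm, hnorm, Nat.cast_add_one]

theorem sineProd_mul_sineProd_reflect {a b n : ℕ} (hn : a + b + 1 = n) :
    sineProd n a * sineProd n b = n / 2 ^ (a + b) := by
  subst hn
  have htail : ∏ i ∈ range b, Real.sin ((a + (i + 1)) * π / (a + b + 1 : ℕ)) =
      sineProd (a + b + 1) b := by
    rw [sineProd, ← prod_range_reflect]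
    refine prod_congr rfl fun i hi => ?_
    rw [← Real.sin_pi_sub, Nat.sub_sub, add_comm 1 i,
      Nat.cast_sub (Nat.succ_le_of_lt (mem_range.1 hi))]
    congr 1
    push_cast
    field_simp
    ring
  rw [← htail, ← sineProd_add, sineProd_succ_self, Nat.cast_add_one]

theorem log_sineProd_add_log_sineProd {m k n : ℕ} (hm : 0 < m) (hk : 0 < k) (hn : m + k = n) :
    Real.log (sineProd n m) + Real.log (sineProd n k) =
      Real.log n - (n - 1) * Real.log 2 + Real.log (Real.sin (m * π / n)) := by
  obtain ⟨b, rfl⟩ := Nat.exists_eq_succ_of_ne_zero hk.ne'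
  have hnR : (n : ℝ) = m + b + 1 := by rw [← hn]; push_cast; ring
  have hsin : 0 < Real.sin (m * π / n) :=
    sin_mul_pi_div_pos (by positivity) (by exact_mod_cast (by lia : m < n))
  have hlast : sineProd n (b + 1) = sineProd n b * Real.sin (m * π / n) := by
    rw [sineProd, prod_range_succ, ← sineProd, ← Real.sin_pi_sub (m * π / n)]
    congr 2
    rw [hnR]
    field_simp
    ring
  have hm' := (sineProd_pos (n := n) (m := m) (by lia)).ne'
  have hb' := (sineProd_pos (n := n) (m := b) (by lia)).ne'
  rw [hlast, Real.log_mul hb' hsin.ne', ← add_assoc, ← Real.log_mul hm' hb',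
    sineProd_mul_sineProd_reflect (by lia : m + b + 1 = n),
    Real.log_div (by rw [hnR]; positivity) (by positivity), Real.log_pow, hnR]
  push_cast
  ring

/-- The Stirling approximation of the sine product `sineProd n m` at the angle `θ = mπ/n`; `n` and
`θ` are real so that the approximation is a smooth function of the angle. -/
noncomputable def sineStirling (n θ : ℝ) : ℝ :=
  √(2 * n * Real.sin θ) * Real.exp (n / π * logSinIntegral θ)

theorem sineStirling_pos {n θ : ℝ} (hn : 0 < n) (hθ : 0 < Real.sin θ) : 0 < sineStirling n θ := by
  unfold sineStirling
  positivity

theorem log_sineStirling {n θ : ℝ} (hn : 0 < n) (hθ : 0 < Real.sin θ) :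
    Real.log (sineStirling n θ) =
      (Real.log 2 + Real.log n + Real.log (Real.sin θ)) / 2 + n / π * logSinIntegral θ := by
  rw [sineStirling, Real.log_mul (by positivity) (by positivity), Real.log_exp,
    Real.log_sqrt (by positivity), Real.log_mul (by positivity) hθ.ne',
    Real.log_mul two_ne_zero hn.ne']

theorem log_sineStirling_add_log_sineStirling {n θ : ℝ} (hn : 0 < n) (hθ : 0 < Real.sin θ) :
    Real.log (sineStirling n θ) + Real.log (sineStirling n (π - θ)) =
      Real.log n - (n - 1) * Real.log 2 + Real.log (Real.sin θ) := by
  rw [log_sineStirling hn hθ, log_sineStirling hn (by rwa [Real.sin_pi_sub]), Real.sin_pi_sub,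
    logSinIntegral_pi_sub]
  field_simp
  ring

theorem sin_le_sin_of_mem_Icc {θ y : ℝ} (hθ : -(π / 2) ≤ θ) (hy : y ∈ Set.Icc θ (π - θ)) :
    Real.sin θ ≤ Real.sin y := by
  rcases le_total y (π / 2) with h | h
  · exact Real.sin_le_sin_of_le_of_le_pi_div_two hθ h hy.1
  · rw [← Real.sin_pi_sub y]
    exact Real.sin_le_sin_of_le_of_le_pi_div_two hθ (by linarith) (by linarith [hy.2])

theorem abs_mul_sum_log_sin_add_le {θ h : ℝ} {N : ℕ} (hθ : 0 < θ) (hh : 0 < h)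
    (hend : θ + N * h = π - θ) :
    |h * ∑ k ∈ range N, Real.log (Real.sin (θ + (k + 1) * h)) +
        (π * Real.log 2 + 2 * logSinIntegral θ)| ≤ N * h ^ 3 / (12 * Real.sin θ ^ 2) := by
  have hNh : 0 ≤ N * h := by positivity
  have hsin : 0 < Real.sin θ := Real.sin_pos_of_pos_of_lt_pi hθ (by linarith [Real.pi_pos])
  have hsin_le : ∀ y ∈ Set.Icc θ (θ + N * h), Real.sin θ ≤ Real.sin y := fun y hy =>
    sin_le_sin_of_mem_Icc (by linarith [Real.pi_pos]) (hend ▸ hy)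
  have htrap := abs_mul_sum_sub_integral_le (ζ := (Real.sin θ ^ 2)⁻¹) hh
    (fun y hy => hasDerivAt_log_sin (hsin.trans_le (hsin_le y hy)).ne')
    (fun y hy => hasDerivAt_cot (hsin.trans_le (hsin_le y hy)).ne')
    (fun y hy => by
      rw [abs_neg, abs_inv, abs_of_nonneg (sq_nonneg _)]
      gcongr
      exact hsin_le y hy)
  rw [hend, Real.sin_pi_sub, sub_self, zero_div, add_zero, integral_log_sin,
    logSinIntegral_pi_sub] at htrap
  convert htrap using 1
  · ring_nf
  · field_simp

theorem abs_log_sineProd_sub_log_sineStirling_le_of_two_mul_le {m n : ℕ} (hm : 0 < m)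
    (hmn : 2 * m ≤ n) :
    |Real.log (sineProd n m) - Real.log (sineStirling n (m * π / n))| ≤
      π ^ 2 / (24 * n * Real.sin (m * π / n) ^ 2) := by
  obtain ⟨N, rfl⟩ := Nat.exists_eq_add_of_le hmn
  set n := 2 * m + N with hn
  have hnm : (n : ℝ) = 2 * m + N := by rw [hn]; push_cast; ring
  have hmR : (0 : ℝ) < m := by exact_mod_cast hm
  have hn0 : (0 : ℝ) < n := by positivity
  have hsin : 0 < Real.sin (m * π / n) :=
    sin_mul_pi_div_pos hmR (by exact_mod_cast (by lia : m < n))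
  have hsum : Real.log (sineProd n (m + N)) = Real.log (sineProd n m) +
      ∑ k ∈ range N, Real.log (Real.sin (m * π / n + (k + 1) * (π / n))) := by
    have hfactor : ∀ k ∈ range N, Real.sin ((m + (k + 1)) * π / n) ≠ 0 := fun k hk =>
      (sin_mul_pi_div_pos (by positivity)
        (by exact_mod_cast (by have := mem_range.1 hk; lia : m + (k + 1) < n))).ne'
    rw [sineProd_add, Real.log_mul (sineProd_pos (by lia)).ne' (prod_ne_zero_iff.2 hfactor),
      Real.log_prod hfactor]
    simp only [add_mul, add_div, mul_div_assoc]
  have hprod := log_sineProd_add_log_sineProd hm (by lia) (by lia : m + (m + N) = n)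
  have hmain := abs_mul_sum_log_sin_add_le (θ := m * π / n) (h := π / n) (N := N) (by positivity)
    (by positivity) (by rw [hnm]; field_simp; ring)
  have herror : π / n * ∑ k ∈ range N, Real.log (Real.sin (m * π / n + (k + 1) * (π / n))) +
      (π * Real.log 2 + 2 * logSinIntegral (m * π / n)) =
      -(2 * π / n) * (Real.log (sineProd n m) - Real.log (sineStirling n (m * π / n))) := by
    rw [log_sineStirling hn0 hsin, eq_sub_of_add_eq' (hsum.symm.trans (eq_sub_of_add_eq' hprod))]
    field_simp
    ring
  rw [herror, abs_mul, abs_neg, abs_of_pos (by positivity), ← le_div_iff₀' (by positivity)] at hmain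
  refine hmain.trans ?_
  calc N * (π / n) ^ 3 / (12 * Real.sin (m * π / n) ^ 2) / (2 * π / n)
      ≤ n * (π / n) ^ 3 / (12 * Real.sin (m * π / n) ^ 2) / (2 * π / n) := by
        gcongr
        lia
    _ = π ^ 2 / (24 * n * Real.sin (m * π / n) ^ 2) := by
        field_simp
        ring

theorem abs_log_sineProd_sub_log_sineStirling_le {m n : ℕ} (hm : 0 < m) (hmn : m < n) :
    |Real.log (sineProd n m) - Real.log (sineStirling n (m * π / n))| ≤
      π ^ 2 / (24 * n * Real.sin (m * π / n) ^ 2) := by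
  rcases le_total (2 * m) n with h | h
  · exact abs_log_sineProd_sub_log_sineStirling_le_of_two_mul_le hm h
  obtain ⟨k, rfl⟩ := Nat.exists_eq_add_of_lt hmn
  set n := m + k + 1 with hn
  have hnR : (n : ℝ) = m + k + 1 := by rw [hn]; push_cast; ring
  have hsin : 0 < Real.sin (m * π / n) :=
    sin_mul_pi_div_pos (by positivity) (by exact_mod_cast hmn)
  have hreflect : ((k + 1 : ℕ) : ℝ) * π / n = π - m * π / n := by
    rw [hnR]
    push_cast
    field_simp
    ring
  have hhalf := abs_log_sineProd_sub_log_sineStirling_le_of_two_mul_le (n := n) k.succ_pos (by lia)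
  have hprod := log_sineProd_add_log_sineProd hm k.succ_pos (by lia : m + (k + 1) = n)
  have hstir := log_sineStirling_add_log_sineStirling (n := n) (by rw [hnR]; positivity) hsin
  rw [hreflect, Real.sin_pi_sub, abs_sub_comm] at hhalf
  convert hhalf using 2
  linarith

theorem sineProd_isEquivalent_sineStirling {ι : Type*} {l : Filter ι} {m n : ι → ℕ} {φ : ι → ℝ}
    {θ : ℝ} (hn : Tendsto n l atTop) (hθ : θ ∈ Set.Ioo 0 π) (hφ : Tendsto φ l (𝓝 θ))
    (hm : ∀ᶠ j in l, m j * π / n j = φ j) :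
    (fun j => sineProd (n j) (m j)) ~[l] fun j => sineStirling (n j) (φ j) := by
  have hsin_lim : Tendsto (fun j => Real.sin (φ j)) l (𝓝 (Real.sin θ)) :=
    (Real.continuous_sin.tendsto θ).comp hφ
  have hsin := Real.sin_pos_of_mem_Ioo hθ
  have hrange : ∀ᶠ j in l, 0 < m j ∧ m j < n j := by
    filter_upwards [hm, hφ.eventually (Ioo_mem_nhds hθ.1 hθ.2), hn.eventually_gt_atTop 0]
      with j hmj ⟨hpos, hlt⟩ hnj
    rw [← hmj, div_lt_iff₀ (by exact_mod_cast hnj), mul_comm,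
      mul_lt_mul_iff_right₀ Real.pi_pos] at hlt
    exact ⟨Nat.pos_of_ne_zero fun h0 => by simp [← hmj, h0] at hpos, by exact_mod_cast hlt⟩
  have hbound : Tendsto (fun j => π ^ 2 / (24 * n j * Real.sin (φ j) ^ 2)) l (𝓝 0) :=
    tendsto_const_nhds.div_atTop <| Tendsto.atTop_mul_pos (by positivity)
      ((tendsto_natCast_atTop_atTop.comp hn).const_mul_atTop (by norm_num)) (hsin_lim.pow 2)
  have hlog : Tendsto (fun j => Real.log (sineProd (n j) (m j)) -
      Real.log (sineStirling (n j) (φ j))) l (𝓝 0) := by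
    refine squeeze_zero_norm' ?_ hbound
    filter_upwards [hm, hrange] with j hmj hj
    simpa only [hmj, Real.norm_eq_abs] using abs_log_sineProd_sub_log_sineStirling_le hj.1 hj.2
  refine isEquivalent_of_tendsto_one ?_
  rw [← Real.exp_zero]
  refine ((Real.continuous_exp.tendsto 0).comp hlog).congr' ?_
  filter_upwards [hrange, hsin_lim.eventually_const_lt hsin] with j hj hsinj
  have hstir := sineStirling_pos (n := n j) (by exact_mod_cast hj.1.trans hj.2) hsinj
  simp only [Function.comp_apply, Pi.div_apply, Real.exp_sub, Real.exp_log hstir,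
    Real.exp_log (sineProd_pos hj.2)]

/-! ### The excursion measure as a quotient of sine products -/

theorem prod_Icc_one_int {M : Type*} [CommMonoid M] (f : ℤ → M) (m : ℕ) :
    ∏ i ∈ Icc (1 : ℤ) m, f i = ∏ k ∈ range m, f (k + 1) := by
  simp [Int.Icc_eq_finset_map, add_comm]

theorem prod_Icc_sin (n m : ℕ) :
    ∏ i ∈ Icc (1 : ℤ) m, Real.sin (i * π / n) = sineProd n m := by
  rw [prod_Icc_one_int, sineProd]
  push_cast
  rfl

/-- The product `∏_{k=1}^m sin ((2k-1)π/(2n))` of sines at the midpoints of the grid of mesh `π/n`,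
complementary to `sineProd n m` in the grid of mesh `π/(2n)`. -/
noncomputable def midpointSineProd (n m : ℕ) : ℝ :=
  ∏ k ∈ range m, Real.sin ((2 * k + 1) * π / (2 * n))

theorem sineProd_two_mul (n m : ℕ) :
    sineProd (2 * n) (2 * m) = midpointSineProd n m * sineProd n m := by
  induction m with
  | zero => simp [sineProd, midpointSineProd]
  | succ m ih =>
    have heven : ((2 * m + 1 : ℕ) + 1) * π / (2 * n : ℕ) = (m + 1) * π / n := by
      push_cast
      rw [← mul_div_mul_left ((m + 1) * π) (n : ℝ) two_ne_zero]
      ring_nf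
    rw [sineProd, show 2 * (m + 1) = 2 * m + 1 + 1 by ring, prod_range_succ, prod_range_succ,
      ← sineProd, ih, midpointSineProd, sineProd, midpointSineProd, sineProd, prod_range_succ,
      prod_range_succ, heven]
    push_cast
    ring

theorem midpointSineProd_pos {n m : ℕ} (hmn : m ≤ n) : 0 < midpointSineProd n m :=
  prod_pos fun k hk => by
    have hk' : k < n := (mem_range.1 hk).trans_le hmn
    refine sin_mul_pi_div_pos (by positivity) ?_
    exact_mod_cast (by lia : 2 * k + 1 < 2 * n)

theorem prod_Icc_cos {a b n : ℕ} (hn : n ≠ 0) (hb : b ≤ n) :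
    ∏ i ∈ Icc (1 : ℤ) a, Real.cos ((2 * i - 1 + n - 2 * (a + b)) * π / (2 * n)) =
      midpointSineProd n (a + b) / midpointSineProd n b := by
  rw [eq_div_iff (midpointSineProd_pos hb).ne', midpointSineProd, midpointSineProd,
    prod_Icc_one_int, add_comm a b, prod_range_add, mul_comm, ← prod_range_reflect _ a]
  congr 1
  refine prod_congr rfl fun k hk => ?_
  rw [← Real.sin_pi_div_two_sub, Nat.sub_sub, add_comm 1 k]
  congr 1
  push_cast [Nat.cast_sub (Nat.succ_le_of_lt (mem_range.1 hk))]
  field_simp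
  ring

theorem ctilde2_self {T : ℕ} (hT : 0 < T) :
    ctilde2 T T = sineProd (3 * T) T ^ 4 * midpointSineProd (3 * T) T /
      (sineProd (3 * T) (2 * T) * midpointSineProd (3 * T) (2 * T)) := by
  have hsin := prod_Icc_sin (3 * T) T
  have hsin_two := prod_Icc_sin (3 * T) (2 * T)
  have hcos : ∏ n ∈ Icc (1 : ℤ) T, Real.cos ((2 * (n : ℝ) - T - 1) * π / (6 * T)) =
      midpointSineProd (3 * T) (2 * T) / midpointSineProd (3 * T) T := by
    rw [two_mul T, ← prod_Icc_cos (by lia) (by lia)]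
    refine prod_congr rfl fun n _ => ?_
    push_cast
    ring_nf
  push_cast at hsin hsin_two
  rw [ctilde2, show 2 * (T : ℤ) - T = T by ring, prod_div_distrib, prod_pow, hsin, hsin_two, hcos]
  field_simp

theorem Ptilde_self_sub {T a b : ℕ} (hT : 0 < T) (hab : a + b = T) :
    Ptilde T T (a - b) = sineProd (3 * T) T * sineProd (6 * T) (2 * T) ^ 3 /
      (sineProd (6 * T) (4 * T) * (sineProd (3 * T) a * sineProd (6 * T) (2 * a)) *
        (sineProd (3 * T) b * sineProd (6 * T) (2 * b))) := by
  have hmem : ((T : ℤ), (a : ℤ) - b) ∈ LambdaSet T :=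
    ⟨⟨a, by lia⟩, Or.inl ⟨by lia, le_rfl, by lia, by lia⟩⟩
  have hcos {c d : ℕ} (hcd : c + d = T) :
      ∏ n ∈ Icc (1 : ℤ) c, Real.cos ((2 * n + T - 1) * π / (6 * T)) =
        midpointSineProd (3 * T) T / midpointSineProd (3 * T) d := by
    rw [← hcd, ← prod_Icc_cos (by lia) (by lia), hcd]
    refine prod_congr rfl fun n _ => ?_
    push_cast [← hcd]
    ring_nf
  have hsin (m : ℕ) : ∏ n ∈ Icc (1 : ℤ) m, Real.sin (n * π / (3 * T)) = sineProd (3 * T) m := by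
    rw [← prod_Icc_sin]
    push_cast
    rfl
  have harg (n : ℤ) : 2 * (n : ℝ) + 3 * T - 2 * (T : ℤ) - 1 = 2 * n + T - 1 := by
    push_cast
    ring
  have harg' (n : ℤ) : 2 * (n : ℝ) + 2 * (T : ℤ) - T - 1 = 2 * n + T - 1 := by
    push_cast
    ring
  have hT_ne := (midpointSineProd_pos (n := 3 * T) (m := T) (by lia)).ne'
  have htwo (m : ℕ) :
      sineProd (6 * T) (2 * m) = midpointSineProd (3 * T) m * sineProd (3 * T) m := by
    rw [show 6 * T = 2 * (3 * T) by ring, sineProd_two_mul]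
  rw [Ptilde, if_pos hmem, ctilde2_self hT, show ((T : ℤ) + (a - b)) / 2 = a by lia,
    show ((T : ℤ) - (a - b)) / 2 = b by lia, show (2 * (T : ℤ) - T - (a - b)) / 2 = b by lia,
    show (2 * (T : ℤ) - T + (a - b)) / 2 = a by lia, show 4 * T = 2 * (2 * T) by ring]
  simp only [harg, harg', prod_div_distrib, prod_const_one, hsin, hcos hab,
    hcos ((add_comm b a).trans hab), htwo]
  field_simp

/-! ### The Gaussian limit -/

theorem sineStirling_mul_sineStirling_two_mul {n θ : ℝ} (hn : 0 ≤ n) (hθ : 0 ≤ Real.sin θ) :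
    sineStirling n θ * sineStirling (2 * n) θ =
      2 * √2 * n * Real.sin θ * Real.exp (3 * n / π * logSinIntegral θ) := by
  have hsqrt : √(2 * n * Real.sin θ) * √(2 * (2 * n) * Real.sin θ) =
      2 * √2 * n * Real.sin θ := by
    rw [show 2 * (2 * n) * Real.sin θ = 2 * (2 * n * Real.sin θ) by ring,
      Real.sqrt_mul zero_le_two, mul_left_comm, Real.mul_self_sqrt (by positivity)]
    ring
  rw [sineStirling, sineStirling, mul_mul_mul_comm, hsqrt, ← Real.exp_add]
  ring_nf

theorem sineStirling_div_sineStirling_pi_sub {n θ : ℝ} (hn : 0 < n) (hθ : 0 < Real.sin θ) :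
    sineStirling n θ / sineStirling n (π - θ) =
      Real.exp (n / π * (2 * logSinIntegral θ + π * Real.log 2)) := by
  rw [sineStirling, sineStirling, Real.sin_pi_sub, logSinIntegral_pi_sub,
    mul_div_mul_left _ _ (by positivity), ← Real.exp_sub]
  ring_nf

theorem logSinIntegral_pi_div_three :
    3 * logSinIntegral (π / 3) = 2 * logSinIntegral (π / 6) - 2 * π / 3 * Real.log 2 := by
  have h := logSinIntegral_two_mul (θ := π / 6) (by positivity) (by linarith [Real.pi_pos])
  rw [show 2 * (π / 6) = π / 3 by ring, show π / 2 - π / 6 = π / 3 by ring] at h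
  linarith

theorem sq_rpow_one_div_four {y : ℝ} (hy : 0 ≤ y) : (y ^ ((1 : ℝ) / 4)) ^ 2 = √y := by
  rw [← Real.rpow_natCast, ← Real.rpow_mul hy, Real.sqrt_eq_rpow]
  norm_num

theorem sineStirling_six_mul_pi_div_three (T : ℝ) :
    sineStirling (6 * T) (π / 3) = √2 * ((3 : ℝ) ^ ((1 : ℝ) / 4)) ^ 3 * √T *
      Real.exp (6 * T / π * logSinIntegral (π / 3)) := by
  have harg : 2 * (6 * T) * Real.sin (π / 3) = 2 * (((3 : ℝ) ^ ((1 : ℝ) / 4)) ^ 3) ^ 2 * T := by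
    rw [Real.sin_pi_div_three, ← pow_mul, mul_comm 3 2, pow_mul,
      sq_rpow_one_div_four zero_le_three, pow_succ √3, Real.sq_sqrt zero_le_three]
    ring
  rw [sineStirling, harg, Real.sqrt_mul (by positivity), Real.sqrt_mul zero_le_two,
    Real.sqrt_sq (by positivity)]

theorem sineStirling_critical {T : ℝ} (hT : 0 < T) :
    √T / 2 * (sineStirling (3 * T) (π / 3) * sineStirling (6 * T) (π / 3) ^ 3 /
      sineStirling (6 * T) (π - π / 3)) =
      9 * (3 : ℝ) ^ ((1 : ℝ) / 4) * T ^ 2 * Real.exp (18 * T / π * logSinIntegral (π / 6)) := by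
  have hsin : 0 < Real.sin (π / 3) := by
    rw [Real.sin_pi_div_three]
    positivity
  have hreflect := sineStirling_div_sineStirling_pi_sub (n := 6 * T) (by positivity) hsin
  have hpair := sineStirling_mul_sineStirling_two_mul (n := 3 * T) (by positivity) hsin.le
  have hexp : Real.exp (18 * T / π * logSinIntegral (π / 6)) =
      Real.exp (3 * (3 * T) / π * logSinIntegral (π / 3)) *
        Real.exp (6 * T / π * logSinIntegral (π / 3)) *
        Real.exp (6 * T / π * (2 * logSinIntegral (π / 3) + π * Real.log 2)) := by
    rw [← Real.exp_add, ← Real.exp_add]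
    congr 1
    linear_combination -9 * T / π * logSinIntegral_pi_div_three
  rw [show 2 * (3 * T) = 6 * T by ring, Real.sin_pi_div_three,
    ← sq_rpow_one_div_four zero_le_three] at hpair
  have hq : ((3 : ℝ) ^ ((1 : ℝ) / 4)) ^ 4 = 3 := by
    rw [← Real.rpow_natCast, ← Real.rpow_mul zero_le_three]
    norm_num
  have hsix := sineStirling_six_mul_pi_div_three T
  set q : ℝ := 3 ^ ((1 : ℝ) / 4)
  have hsqrt_two : √2 ^ 2 = 2 := Real.sq_sqrt zero_le_two
  have hsqrt_T : √T ^ 2 = T := Real.sq_sqrt hT.le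
  calc √T / 2 * (sineStirling (3 * T) (π / 3) * sineStirling (6 * T) (π / 3) ^ 3 /
        sineStirling (6 * T) (π - π / 3))
      = √T / 2 * (sineStirling (3 * T) (π / 3) * sineStirling (6 * T) (π / 3) *
          sineStirling (6 * T) (π / 3) *
          (sineStirling (6 * T) (π / 3) / sineStirling (6 * T) (π - π / 3))) := by ring
    _ = √T ^ 2 * √2 ^ 2 * q ^ 4 * (3 / 2 * q * T) *
          Real.exp (18 * T / π * logSinIntegral (π / 6)) := by
        rw [hreflect, hpair, hsix, hexp]
        ring
    _ = 9 * q * T ^ 2 * Real.exp (18 * T / π * logSinIntegral (π / 6)) := by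
        rw [hsqrt_T, hsqrt_two, hq]
        ring

theorem sqrt_div_two_mul_sineStirling_ratio {T α β : ℝ} (hT : 0 < T) (hα : 0 ≤ Real.sin α)
    (hβ : 0 ≤ Real.sin β) :
    √T / 2 * (sineStirling (3 * T) (π / 3) * sineStirling (6 * T) (π / 3) ^ 3 /
      (sineStirling (6 * T) (π - π / 3) * (sineStirling (3 * T) α * sineStirling (6 * T) α) *
        (sineStirling (3 * T) β * sineStirling (6 * T) β))) =
      (3 : ℝ) ^ ((1 : ℝ) / 4) / (8 * (Real.sin α * Real.sin β)) *
        Real.exp (-(9 * T / π) *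
          (logSinIntegral α + logSinIntegral β - 2 * logSinIntegral (π / 6))) := by
  have hpair {θ : ℝ} (hθ : 0 ≤ Real.sin θ) : sineStirling (3 * T) θ * sineStirling (6 * T) θ =
      6 * √2 * T * Real.sin θ * Real.exp (9 * T / π * logSinIntegral θ) := by
    rw [show 6 * T = 2 * (3 * T) by ring, sineStirling_mul_sineStirling_two_mul (by positivity) hθ]
    ring_nf
  have hexp : Real.exp (-(9 * T / π) *
      (logSinIntegral α + logSinIntegral β - 2 * logSinIntegral (π / 6))) =
      Real.exp (18 * T / π * logSinIntegral (π / 6)) /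
        (Real.exp (9 * T / π * logSinIntegral α) * Real.exp (9 * T / π * logSinIntegral β)) := by
    rw [← Real.exp_add, ← Real.exp_sub]
    ring_nf
  have hsq : √2 ^ 2 = 2 := Real.sq_sqrt zero_le_two
  rw [mul_assoc (sineStirling (6 * T) (π - π / 3)), ← div_div, ← mul_div_assoc,
    sineStirling_critical hT, hpair hα, hpair hβ, hexp]
  field_simp
  rw [hsq]
  ring

theorem Ptilde_self_sub_isEquivalent {ι : Type*} {l : Filter ι} {T a b : ι → ℕ} {α β : ℝ}
    (hT : Tendsto T l atTop) (hab : ∀ᶠ j in l, a j + b j = T j) (hα : α ∈ Set.Ioo 0 π)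
    (hβ : β ∈ Set.Ioo 0 π) (ha : Tendsto (fun j => a j * π / (3 * T j)) l (𝓝 α))
    (hb : Tendsto (fun j => b j * π / (3 * T j)) l (𝓝 β)) :
    (fun j => Ptilde (T j) (T j) (a j - b j)) ~[l] fun j =>
      sineStirling (3 * T j) (π / 3) * sineStirling (6 * T j) (π / 3) ^ 3 /
        (sineStirling (6 * T j) (π - π / 3) *
          (sineStirling (3 * T j) (a j * π / (3 * T j)) *
            sineStirling (6 * T j) (a j * π / (3 * T j))) *
          (sineStirling (3 * T j) (b j * π / (3 * T j)) *
            sineStirling (6 * T j) (b j * π / (3 * T j)))) := by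
  have hstir (c : ℕ) (hc : 0 < c) {m : ι → ℕ} {φ : ι → ℝ} {θ : ℝ} (hθ : θ ∈ Set.Ioo 0 π)
      (hφ : Tendsto φ l (𝓝 θ)) (hm : ∀ j, 0 < T j → m j * π / (c * T j) = φ j) :
      (fun j => sineProd (c * T j) (m j)) ~[l] fun j => sineStirling (c * T j) (φ j) := by
    simpa only [Nat.cast_mul] using sineProd_isEquivalent_sineStirling
      (hT.const_mul_atTop' hc) hθ hφ ((hT.eventually_gt_atTop 0).mono fun j hj => by
        rw [Nat.cast_mul, hm j hj])
  have h3 : π / 3 ∈ Set.Ioo 0 π := ⟨by positivity, by linarith [Real.pi_pos]⟩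
  have h23 : π - π / 3 ∈ Set.Ioo 0 π := ⟨by linarith [h3.2], by linarith [h3.1]⟩
  have hcrit := hstir 3 three_pos (m := T) h3 tendsto_const_nhds fun j hj => by
    push_cast
    field_simp
  have hcrit_two := hstir 6 (by norm_num) (m := fun j => 2 * T j) h3 tendsto_const_nhds
    fun j hj => by push_cast; field_simp; norm_num
  have hcrit_four := hstir 6 (by norm_num) (m := fun j => 4 * T j) h23 tendsto_const_nhds
    fun j hj => by push_cast; field_simp; norm_num
  have hpair {m : ι → ℕ} {θ : ℝ} (hθ : θ ∈ Set.Ioo 0 π)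
      (hm : Tendsto (fun j => m j * π / (3 * T j)) l (𝓝 θ)) :=
    (hstir 3 three_pos hθ hm fun j _ => rfl).mul
      (hstir 6 (by norm_num) (m := fun j => 2 * m j) hθ hm
        fun j _ => by push_cast; field_simp; ring)
  refine ((hcrit.mul (hcrit_two.pow 3)).div ((hcrit_four.mul (hpair hα ha)).mul
    (hpair hβ hb))).congr_left ?_
  filter_upwards [hab, hT.eventually_gt_atTop 0] with j habj hj
  exact (Ptilde_self_sub hj habj).symm

theorem tendsto_exp_second_difference_logSinIntegral {ι : Type*} {l : Filter ι} {T d : ι → ℝ}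
    {s : ℝ} (hd : Tendsto d l (𝓝 0)) (hs : Tendsto (fun j => T j * d j ^ 2) l (𝓝 s)) :
    Tendsto (fun j => Real.exp (-(9 * T j / π) * (logSinIntegral (π / 6 + d j) +
      logSinIntegral (π / 6 - d j) - 2 * logSinIntegral (π / 6)))) l
      (𝓝 (Real.exp (-(9 * √3 / π) * s))) := by
  have hsin : ∀ᶠ y in 𝓝 (π / 6), Real.sin y ≠ 0 :=
    Real.continuous_sin.continuousAt.eventually_ne (by simp)
  have hcot : Real.cot (π / 6) = √3 := by
    rw [Real.cot_eq_cos_div_sin, Real.cos_pi_div_six, Real.sin_pi_div_six]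
    ring
  have hsnd := tendsto_second_difference_div (d := d) (h := fun j => (T j)⁻¹) (L := s)
    (hsin.mono fun y hy => hasDerivAt_logSinIntegral hy) (hasDerivAt_log_sin hsin.self_of_nhds) hd
    (by simpa [mul_comm] using hs)
  convert (Real.continuous_exp.tendsto _).comp (hsnd.const_mul (-(9 / π))) using 2 with j
  · simp only [Function.comp_apply, div_inv_eq_mul]
    ring_nf
  · rw [hcot]
    ring_nf

theorem tendsto_sineStirling_ratio {ι : Type*} {l : Filter ι} {T d : ι → ℝ} {s : ℝ}
    (hT : ∀ᶠ j in l, 0 < T j) (hd : Tendsto d l (𝓝 0))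
    (hs : Tendsto (fun j => T j * d j ^ 2) l (𝓝 s)) :
    Tendsto (fun j => √(T j) / 2 *
      (sineStirling (3 * T j) (π / 3) * sineStirling (6 * T j) (π / 3) ^ 3 /
        (sineStirling (6 * T j) (π - π / 3) *
          (sineStirling (3 * T j) (π / 6 + d j) * sineStirling (6 * T j) (π / 6 + d j)) *
          (sineStirling (3 * T j) (π / 6 - d j) * sineStirling (6 * T j) (π / 6 - d j))))) l
      (𝓝 ((3 : ℝ) ^ ((1 : ℝ) / 4) / 2 * Real.exp (-(9 * √3 / π) * s))) := by
  have hplus : Tendsto (fun j => Real.sin (π / 6 + d j)) l (𝓝 (1 / 2)) := by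
    rw [← Real.sin_pi_div_six]
    exact (Real.continuous_sin.tendsto _).comp (by simpa using hd.const_add (π / 6))
  have hminus : Tendsto (fun j => Real.sin (π / 6 - d j)) l (𝓝 (1 / 2)) := by
    rw [← Real.sin_pi_div_six]
    exact (Real.continuous_sin.tendsto _).comp (by simpa using hd.const_sub (π / 6))
  have hlim := ((tendsto_const_nhds (x := (3 : ℝ) ^ ((1 : ℝ) / 4))).div
    ((hplus.mul hminus).const_mul 8) (by norm_num)).mul
    (tendsto_exp_second_difference_logSinIntegral hd hs)
  rw [show (8 * (1 / 2 * (1 / 2)) : ℝ) = 2 by norm_num] at hlim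
  refine hlim.congr' ?_
  filter_upwards [hT, hplus.eventually_const_le one_half_pos,
    hminus.eventually_const_le one_half_pos] with j hTj hα hβ
  exact (sqrt_div_two_mul_sineStirling_ratio hTj hα hβ).symm

theorem mul_pi_div_three_mul_eq {t a b : ℝ} (ht : 0 < t) (hab : a + b = t) :
    a * π / (3 * t) = π / 6 + π / 6 * ((a - b) / √t) / √t := by
  rw [← mul_div_assoc, div_div, Real.mul_self_sqrt ht.le, eq_sub_of_add_eq' hab]
  field_simp
  ring

theorem tendsto_sqrt_div_two_mul_Ptilde {ι : Type*} {l : Filter ι} {T a b : ι → ℕ} {ξ : ℝ}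
    (hT : Tendsto T l atTop) (hab : ∀ᶠ j in l, a j + b j = T j)
    (hξ : Tendsto (fun j => ((a j : ℝ) - b j) / √(T j)) l (𝓝 ξ)) :
    Tendsto (fun j => √(T j) / 2 * Ptilde (T j) (T j) (a j - b j)) l
      (𝓝 ((3 : ℝ) ^ ((1 : ℝ) / 4) / 2 * Real.exp (-(√3 * π / 4) * ξ ^ 2))) := by
  set d : ι → ℝ := fun j => π / 6 * (((a j : ℝ) - b j) / √(T j)) / √(T j) with hd
  have hpos : ∀ᶠ j in l, (0 : ℝ) < T j :=
    (tendsto_natCast_atTop_atTop.comp hT).eventually_gt_atTop 0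
  have hd_lim : Tendsto d l (𝓝 0) := (hξ.const_mul (π / 6)).div_atTop
    (Real.tendsto_sqrt_atTop.comp (tendsto_natCast_atTop_atTop.comp hT))
  have hdT : Tendsto (fun j => T j * d j ^ 2) l (𝓝 ((π / 6 * ξ) ^ 2)) := by
    refine ((hξ.const_mul (π / 6)).pow 2).congr' (hpos.mono fun j hj => ?_)
    simp only [hd]
    rw [div_pow _ (√(T j : ℝ)), Real.sq_sqrt hj.le, mul_div_cancel₀ _ hj.ne']
  have ha : ∀ᶠ j in l, a j * π / (3 * T j) = π / 6 + d j := by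
    filter_upwards [hpos, hab] with j hj habj
    exact mul_pi_div_three_mul_eq hj (by exact_mod_cast habj)
  have hb : ∀ᶠ j in l, b j * π / (3 * T j) = π / 6 - d j := by
    filter_upwards [hpos, hab] with j hj habj
    rw [mul_pi_div_three_mul_eq (b := a j) hj (by exact_mod_cast (add_comm _ _).trans habj), hd]
    ring
  have h6 : π / 6 ∈ Set.Ioo 0 π := ⟨by positivity, by linarith [Real.pi_pos]⟩
  have hequiv := Ptilde_self_sub_isEquivalent hT hab h6 h6
    (Tendsto.congr' (ha.mono fun _ => Eq.symm) (by simpa using hd_lim.const_add (π / 6)))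
    (Tendsto.congr' (hb.mono fun _ => Eq.symm) (by simpa using hd_lim.const_sub (π / 6)))
  refine (IsEquivalent.refl.mul hequiv).symm.tendsto_nhds ?_
  convert (tendsto_sineStirling_ratio hpos hd_lim hdT).congr' ?_ using 2
  · congr 2
    field_simp
    ring
  · filter_upwards [ha, hb] with j haj hbj
    simp only [haj, hbj, Pi.mul_apply]

theorem eventually_abs_le_of_tendsto_div_sqrt {ι : Type*} {l : Filter ι} {t x : ι → ℝ} {ξ : ℝ}
    (ht : Tendsto t l atTop) (hx : Tendsto (fun j => x j / √(t j)) l (𝓝 ξ)) :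
    ∀ᶠ j in l, |x j| ≤ t j := by
  have hratio : Tendsto (fun j => |x j / √(t j) / √(t j)|) l (𝓝 0) := by
    simpa using (hx.div_atTop (Real.tendsto_sqrt_atTop.comp ht)).abs
  filter_upwards [hratio.eventually_le_const one_pos, ht.eventually_gt_atTop 0] with j hj hpos
  rwa [div_div, Real.mul_self_sqrt hpos.le, abs_div, abs_of_pos hpos, div_le_one hpos] at hj

theorem exists_natCast_sub_eq {n : ℕ} {x : ℤ} (heven : Even ((n : ℤ) + x)) (hx : |x| ≤ n) :
    ∃ a b : ℕ, a + b = n ∧ (a : ℤ) - b = x := by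
  obtain ⟨k, hk⟩ := heven
  rw [abs_le] at hx
  exact ⟨k.toNat, (k - x).toNat, by lia, by lia⟩

/-- Proposition 7.3: the central limit theorem at time `t = T` for the simplified
trigonometric excursion process: `(√T/2)·P̃_{2T}(T, √T ξ)` converges to the normal
density `f(ξ) = (3^{1/4}/2)·exp(−(√3 π/4) ξ²)` of variance `2/(√3 π)`. -/
theorem simplified_trig_CLT (ξ : ℝ)
    (T : ℕ → ℕ) (hTpos : ∀ j, 0 < T j)
    (hT : Tendsto (fun j => (T j : ℝ)) atTop atTop)
    (x : ℕ → ℤ) (hpar : ∀ j, Even ((T j : ℤ) + x j))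
    (hx : Tendsto (fun j => (x j : ℝ) / Real.sqrt (T j : ℝ)) atTop (nhds ξ)) :
    Tendsto (fun j => Real.sqrt (T j : ℝ) / 2 * Ptilde (T j) (T j : ℤ) (x j))
      atTop (nhds ((3 : ℝ) ^ ((1 : ℝ) / 4) / 2 * Real.exp (-(Real.sqrt 3 * π / 4) * ξ ^ 2))) := by
  have hsteps : ∀ᶠ j in atTop, ∃ a b : ℕ, a + b = T j ∧ (a : ℤ) - b = x j := by
    filter_upwards [eventually_abs_le_of_tendsto_div_sqrt hT hx] with j hj
    exact exists_natCast_sub_eq (hpar j) (by exact_mod_cast hj)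
  obtain ⟨a, ha⟩ := hsteps.choice
  obtain ⟨b, hab⟩ := ha.choice
  refine (tendsto_sqrt_div_two_mul_Ptilde (tendsto_natCast_atTop_iff.1 hT)
    (hab.mono fun _ h => h.1) (hx.congr' ?_)).congr' ?_
  · filter_upwards [hab] with j hj
    rw [← hj.2, Int.cast_sub, Int.cast_natCast, Int.cast_natCast]
  · filter_upwards [hab] with j hj
    rw [hj.2]
end
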